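/- Let P ⊂ ℝ³ be a convex polytope with non-empty interior and let Λ ⊂ ∂P, where interior, closure and boundary of subsets of ∂P are taken in the relative topology of ∂P. Assume that int Λ is connected, Λ = cl(int Λ), Λ ≠ ∅, Λ ≠ ∂P, and that ∂Λ is the union of finitely many polygonal curves, each with finitely many edges. Then the boundary of each connected component of ∂P \ Λ is a simple closed curve. -/

import Mathlib

open MeasureTheory Pointwise

/-- A (compact) convex polytope: the convex hull of a finite set. -/
def IsPolytope (P : Set (EuclideanSpace ℝ (Fin 3))) : Prop :=
  ∃ S : Finset (EuclideanSpace ℝ (Fin 3)),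
    P = convexHull ℝ (S : Set (EuclideanSpace ℝ (Fin 3)))

/-!
Let `D` be a component of `Λᶜ`. Its frontier is a subgraph of the segment complex `∂Λ`. An edge of
this subgraph with a free end would be a slit, which has only one side, whereas both `D` and
`interior Λ` accumulate at every point of `frontier D`; so the subgraph contains a cycle `Z`. A
cycle separates the sphere, as one sees by comparing logarithms of `(z - a) / (z - b)` off its two
arcs. If every component of `Λᶜ` had a frontier point off `Z`, all of `Zᶜ` would be connected
through `interior Λ`; so some component `D'` satisfies `frontier D' ⊆ Z ⊆ frontier D`. An edge has
only two sides, one of which belongs to `interior Λ`, so `D' = D` and `frontier D = Z`.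

Sides are counted in space: radial projection from an interior point of the convex body carries
the half-spaces cut out by the plane through that point and an edge to the sides of the edge.
-/

section

open Set Topology Filter unitInterval

section Logarithms

lemma exists_log_of_homotopy {A : Type*} [TopologicalSpace A] (H : C(I × A, ℂ))
    (hne : ∀ x, H x ≠ 0) (h0 : ∀ a, H (0, a) = 1) :
    ∃ L : C(A, ℂ), ∀ a, Complex.exp (L a) = H (1, a) := by
  let H' : C(I × A, {z : ℂ // z ≠ 0}) := ⟨fun x => ⟨H x, hne x⟩, by fun_prop⟩
  have h0' : ∀ a, H' (0, a) = (⟨_, Complex.exp_ne_zero ((ContinuousMap.const A (0 : ℂ)) a)⟩ :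
      {z : ℂ // z ≠ 0}) := fun a => Subtype.ext (by simp [H', h0])
  let G := Complex.isCoveringMap_exp.liftHomotopy H' (ContinuousMap.const A (0 : ℂ)) h0'
  have hG := Complex.isCoveringMap_exp.liftHomotopy_lifts H' (ContinuousMap.const A (0 : ℂ)) h0'
  exact ⟨⟨fun a => G (1, a), by fun_prop⟩, fun a => congrArg Subtype.val (congr_fun hG (1, a))⟩

lemma eq_of_cexp_eq_const_of_isPreconnected {A : Type*} [TopologicalSpace A] {s : Set A}
    (hs : IsPreconnected s) {g : A → ℂ} (hg : ContinuousOn g s) {c : ℂ}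
    (hc : ∀ a ∈ s, Complex.exp (g a) = c) {a a' : A} (ha : a ∈ s) (ha' : a' ∈ s) : g a = g a' :=
  Complex.isCoveringMap_exp.constOn_of_comp hs hg
    (fun x hx y hy => Subtype.ext (by simp [hc x hx, hc y hy])) ha ha'

-- The quotient is joined to `1` by the homotopy `(z - α (1 - t)) / (z - b)`.
lemma exists_log_div_compl_range_path {a b : ℂ} (α : Path a b) :
    ∃ L : ℂ → ℂ, ContinuousOn L (range α)ᶜ ∧
      ∀ z ∉ range α, Complex.exp (L z) = (z - a) / (z - b) := by
  classical
  have hne (z : ((range α)ᶜ : Set ℂ)) (t : I) : (z : ℂ) - α t ≠ 0 :=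
    fun h => z.2 ⟨t, (sub_eq_zero.mp h).symm⟩
  have hneb (z : ((range α)ᶜ : Set ℂ)) : (z : ℂ) - b ≠ 0 := by simpa using hne z 1
  let H : C(I × ((range α)ᶜ : Set ℂ), ℂ) :=
    ⟨fun x => ((x.2 : ℂ) - α (σ x.1)) / (x.2 - b),
      Continuous.div (by fun_prop) (by fun_prop) fun x => hneb x.2⟩
  obtain ⟨L, hL⟩ := exists_log_of_homotopy H (fun x => div_ne_zero (hne _ _) (hneb _))
    fun z => by simp [H, div_self (hneb z)]
  refine ⟨fun z => if h : z ∈ (range α)ᶜ then L ⟨z, h⟩ else 0, ?_, fun z hz => ?_⟩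
  · rw [continuousOn_iff_continuous_domRestrict]
    exact L.continuous.congr fun z => by simp [Set.domRestrict]
  · simp [hz, hL, H]

-- Along the preimage of the circle `|w| = 1/2` under `z ↦ (z - a) / (z - b)` a logarithm would
-- grow by `2πi`.
lemma not_exists_log_div {a b : ℂ} (hab : a ≠ b) :
    ¬∃ M : ℂ → ℂ, ContinuousOn M {a, b}ᶜ ∧
      ∀ z ∉ ({a, b} : Set ℂ), Complex.exp (M z) = (z - a) / (z - b) := by
  rintro ⟨M, hM, hMexp⟩
  have hab' : a - b ≠ 0 := sub_ne_zero.mpr hab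
  let w : ℝ → ℂ := fun t => Complex.exp (t * Complex.I) / 2
  have hw0 (t : ℝ) : w t ≠ 0 := div_ne_zero (Complex.exp_ne_zero _) two_ne_zero
  have hw1 (t : ℝ) : 1 - w t ≠ 0 := by
    intro h
    have hnorm : ‖w t‖ = 1 / 2 := by simp [w, Complex.norm_exp_ofReal_mul_I]
    rw [← sub_eq_zero.mp h] at hnorm
    norm_num at hnorm
  let ζ : ℝ → ℂ := fun t => (a - b * w t) / (1 - w t)
  have hζa (t : ℝ) : ζ t - a = (a - b) * w t / (1 - w t) := by
    rw [eq_div_iff (hw1 t), sub_mul, div_mul_cancel₀ _ (hw1 t)]; ring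
  have hζb (t : ℝ) : ζ t - b = (a - b) / (1 - w t) := by
    rw [eq_div_iff (hw1 t), sub_mul, div_mul_cancel₀ _ (hw1 t)]; ring
  have hζ (t : ℝ) : ζ t ∉ ({a, b} : Set ℂ) := by
    rintro (h | h)
    · exact div_ne_zero (mul_ne_zero hab' (hw0 t)) (hw1 t) (by rw [← hζa, h, sub_self])
    · exact div_ne_zero hab' (hw1 t) (by rw [← hζb, mem_singleton_iff.mp h, sub_self])
  have hζcont : Continuous ζ :=
    Continuous.div (by fun_prop) (by fun_prop) hw1
  have hMζ : Continuous fun t : ℝ => M (ζ t) := hM.comp_continuous hζcont hζ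
  have hMexpζ (t : ℝ) : Complex.exp (M (ζ t)) = w t := by
    rw [hMexp _ (hζ t), hζa, hζb, div_div_div_cancel_right₀ (hw1 t), mul_div_cancel_left₀ _ hab']
  have hconst : M (ζ 0) - (0 : ℝ) * Complex.I =
      M (ζ (2 * Real.pi)) - (2 * Real.pi : ℝ) * Complex.I :=
    eq_of_cexp_eq_const_of_isPreconnected isPreconnected_univ
      (g := fun t : ℝ => M (ζ t) - t * Complex.I) (hMζ.sub (by fun_prop)).continuousOn (c := 1 / 2)
      (fun t _ => by
        rw [Complex.exp_sub, hMexpζ, div_div_cancel_left' (Complex.exp_ne_zero _), one_div])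
      (mem_univ _) (mem_univ _)
  have hperiod : ζ (2 * Real.pi) = ζ 0 := by simp [ζ, w, Complex.exp_two_pi_mul_I]
  rw [hperiod] at hconst
  apply Complex.two_pi_I_ne_zero
  push_cast at hconst
  linear_combination hconst

end Logarithms

section JordanSeparation

lemma nonempty_compl_union_range_path {a b c d : ℂ} (α : Path a b) (β : Path c d) :
    (range α ∪ range β)ᶜ.Nonempty := by
  rw [nonempty_compl]
  exact ((isCompact_range α.continuous).union (isCompact_range β.continuous)).ne_univ

-- On a connected complement the logarithms of `(z - a) / (z - b)` off the two paths differ by a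
-- constant, so they glue to a logarithm on all of `ℂ \ {a, b}`.
theorem not_isPreconnected_compl_union_range_path {a b : ℂ} (hab : a ≠ b) (α β : Path a b)
    (hαβ : range α ∩ range β ⊆ {a, b}) : ¬IsPreconnected (range α ∪ range β)ᶜ := by
  classical
  intro hconn
  obtain ⟨L, hL, hLexp⟩ := exists_log_div_compl_range_path α
  obtain ⟨L', hL', hLexp'⟩ := exists_log_div_compl_range_path β
  obtain ⟨z₀, hz₀⟩ := nonempty_compl_union_range_path α β
  have hmem {z : ℂ} (hz : z ∈ (range α ∪ range β)ᶜ) : z ∈ (range α)ᶜ ∧ z ∈ (range β)ᶜ := by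
    rwa [compl_union] at hz
  set k := L z₀ - L' z₀ with hk
  have hexp {z : ℂ} (hz : z ∈ (range α ∪ range β)ᶜ) : Complex.exp (L z - L' z) = 1 := by
    rw [Complex.exp_sub, hLexp z (hmem hz).1, hLexp' z (hmem hz).2, div_self]
    rw [← hLexp z (hmem hz).1]
    exact Complex.exp_ne_zero _
  have hdiff {z : ℂ} (hz : z ∈ (range α ∪ range β)ᶜ) : L z = L' z + k := by
    rw [← sub_eq_iff_eq_add', hk]
    exact eq_of_cexp_eq_const_of_isPreconnected hconn (g := fun z => L z - L' z)
      ((hL.mono fun z hz => (hmem hz).1).sub (hL'.mono fun z hz => (hmem hz).2))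
      (fun z hz => hexp hz) hz hz₀
  let M : ℂ → ℂ := fun z => if z ∈ range α then L' z + k else L z
  have hML : EqOn M L (range α)ᶜ := fun z hz => if_neg hz
  have hML' : EqOn M (fun z => L' z + k) (range β)ᶜ := fun z hz => by
    by_cases hzα : z ∈ range α
    · exact if_pos hzα
    · rw [hML hzα, hdiff (by rw [compl_union]; exact ⟨hzα, hz⟩)]
  have hcover (z : ℂ) (hz : z ∉ ({a, b} : Set ℂ)) : z ∈ (range α)ᶜ ∨ z ∈ (range β)ᶜ := by
    by_contra! h
    exact hz (hαβ ⟨not_not.mp h.1, not_not.mp h.2⟩)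
  have hopen {c d : ℂ} (γ : Path c d) : IsOpen (range γ)ᶜ :=
    (isCompact_range γ.continuous).isClosed.isOpen_compl
  refine not_exists_log_div hab ⟨M, fun z hz => ContinuousAt.continuousWithinAt ?_, fun z hz => ?_⟩
  · rcases hcover z hz with h | h
    · exact (hL.congr hML).continuousAt ((hopen α).mem_nhds h)
    · exact ((hL'.add continuousOn_const).congr hML').continuousAt ((hopen β).mem_nhds h)
  · rcases hcover z hz with h | h
    · rw [hML h, hLexp z h]
    · have hk1 : Complex.exp k = 1 := hexp hz₀
      rw [hML' h, Complex.exp_add, hk1, mul_one, hLexp' z h]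

end JordanSeparation

section Arcs

variable {T : Type*} [TopologicalSpace T]

/-- `IsArc u v K` says that `K` is an arc from `u` to `v`: the image of an injective path. -/
def IsArc (u v : T) (K : Set T) : Prop :=
  ∃ γ : Path u v, Function.Injective γ ∧ range γ = K

/-- `K` is a simple closed curve: an injective continuous image of the unit circle of the Euclidean
plane. -/
def IsSimpleClosedCurve (K : Set T) : Prop :=
  ∃ γ : Metric.sphere (0 : EuclideanSpace ℝ (Fin 2)) 1 → T,
    Continuous γ ∧ Function.Injective γ ∧ range γ = K

lemma IsArc.left_mem {a b : T} {K : Set T} (hK : IsArc a b K) : a ∈ K := by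
  obtain ⟨γ, -, rfl⟩ := hK
  exact ⟨0, γ.source⟩

lemma IsArc.right_mem {a b : T} {K : Set T} (hK : IsArc a b K) : b ∈ K := by
  obtain ⟨γ, -, rfl⟩ := hK
  exact ⟨1, γ.target⟩

lemma eq_or_ends_of_path_trans_eq {a b c : T} {α : Path a b} {β : Path b c}
    (hα : Function.Injective α) (hβ : Function.Injective β)
    (hαβ : ∀ s t, α s = β t → t = 0 ∨ s = 0 ∧ t = 1) {s t : I}
    (hst : α.trans β s = α.trans β t) : s = t ∨ s = 0 ∧ t = 1 ∨ s = 1 ∧ t = 0 := by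
  wlog hle : s ≤ t generalizing s t
  · rcases this hst.symm (le_of_not_ge hle) with h | ⟨h, h'⟩ | ⟨h, h'⟩
    exacts [.inl h.symm, .inr (.inr ⟨h', h⟩), .inr (.inl ⟨h', h⟩)]
  rw [Path.trans_apply, Path.trans_apply] at hst
  rcases le_or_gt (t : ℝ) (1 / 2) with ht | ht
  · have hs : (s : ℝ) ≤ 1 / 2 := le_trans (Subtype.coe_le_coe.mpr hle) ht
    rw [dif_pos hs, dif_pos ht] at hst
    have := congrArg Subtype.val (hα hst)
    exact .inl (Subtype.ext (by linarith))
  rw [dif_neg ht.not_ge] at hst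
  rcases le_or_gt (s : ℝ) (1 / 2) with hs | hs
  · rw [dif_pos hs] at hst
    rcases hαβ _ _ hst with h | ⟨h, h'⟩
    · have := congrArg Subtype.val h
      simp only [Icc.coe_zero] at this
      linarith
    · have h0 := congrArg Subtype.val h
      have h1 := congrArg Subtype.val h'
      simp only [Icc.coe_zero, Icc.coe_one] at h0 h1
      exact .inr (.inl ⟨Subtype.ext (by simp only [Icc.coe_zero]; linarith),
        Subtype.ext (by simp only [Icc.coe_one]; linarith)⟩)
  · rw [dif_neg hs.not_ge] at hst
    have := congrArg Subtype.val (hβ hst)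
    exact .inl (Subtype.ext (by linarith))

lemma isSimpleClosedCurve_range_loop {a : T} (γ : Path a a)
    (hγ : ∀ s t, γ s = γ t → s = t ∨ s = 0 ∧ t = 1 ∨ s = 1 ∧ t = 0) :
    IsSimpleClosedCurve (range γ) := by
  let φ : EuclideanSpace ℝ (Fin 2) ≃ₗᵢ[ℝ] ℂ := Complex.orthonormalBasisOneI.repr.symm
  have hφ (z : EuclideanSpace ℝ (Fin 2)) :
      z ∈ Metric.sphere 0 1 ↔ φ z ∈ Submonoid.unitSphere ℂ := by
    change _ ↔ φ z ∈ Metric.sphere (0 : ℂ) 1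
    rw [mem_sphere_zero_iff_norm, mem_sphere_zero_iff_norm, φ.norm_map]
  let e : Metric.sphere (0 : EuclideanSpace ℝ (Fin 2)) 1 ≃ₜ AddCircle (1 : ℝ) :=
    (φ.toHomeomorph.subtype hφ).trans (AddCircle.homeomorphCircle one_ne_zero).symm
  let f := AddCircle.liftIco 1 0 γ.extend
  have hf (t : I) (ht : t ≠ 1) : f (t : ℝ) = γ t := by
    have hmem : (t : ℝ) ∈ Ico (0 : ℝ) 1 :=
      ⟨t.2.1, lt_of_le_of_ne t.2.2 fun h => ht (Subtype.ext h)⟩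
    simp only [f, AddCircle.liftIco_zero_coe_apply hmem, γ.extend_apply t.2, Subtype.coe_eta]
  have hlift (x : AddCircle (1 : ℝ)) : ∃ t : I, t ≠ 1 ∧ ((t : ℝ) : AddCircle (1 : ℝ)) = x := by
    obtain ⟨t, ht, rfl⟩ := AddCircle.eq_coe_Ico x
    exact ⟨⟨t, ht.1, ht.2.le⟩, fun h => ht.2.ne (congrArg Subtype.val h), rfl⟩
  have hfcont : Continuous f :=
    AddCircle.liftIco_zero_continuous (by simp) γ.continuous_extend.continuousOn
  have hfinj : Function.Injective f := by
    intro x y hxy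
    obtain ⟨s, hs, rfl⟩ := hlift x
    obtain ⟨t, ht, rfl⟩ := hlift y
    rw [hf s hs, hf t ht] at hxy
    rcases hγ s t hxy with rfl | ⟨-, h⟩ | ⟨h, -⟩
    exacts [rfl, absurd h ht, absurd h hs]
  have hfrange : range f = range γ := by
    refine Subset.antisymm ?_ ?_
    · rintro _ ⟨x, rfl⟩
      obtain ⟨t, ht, rfl⟩ := hlift x
      exact ⟨t, (hf t ht).symm⟩
    · rintro _ ⟨t, rfl⟩
      by_cases ht : t = 1
      · exact ⟨((0 : I) : ℝ), by rw [hf 0 zero_ne_one, ht, γ.source, γ.target]⟩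
      · exact ⟨_, hf t ht⟩
  exact ⟨f ∘ e, hfcont.comp e.continuous, hfinj.comp e.injective,
    by rw [e.surjective.range_comp, hfrange]⟩

namespace IsArc

variable {a b c : T} {K L : Set T}

lemma isCompact (hK : IsArc a b K) : IsCompact K := by
  obtain ⟨γ, -, rfl⟩ := hK
  exact isCompact_range γ.continuous

lemma trans (hK : IsArc a b K) (hL : IsArc b c L) (hKL : K ∩ L ⊆ {b}) : IsArc a c (K ∪ L) := by
  obtain ⟨α, hα, rfl⟩ := hK
  obtain ⟨β, hβ, rfl⟩ := hL
  have hmeet (s t : I) (h : α s = β t) : t = 0 :=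
    hβ ((hKL ⟨⟨s, h⟩, mem_range_self t⟩).trans β.source.symm)
  have hne : α.trans β 0 ≠ α.trans β 1 := fun h =>
    one_ne_zero (hmeet 0 1 (by rwa [Path.source, Path.target, ← α.source, ← β.target] at h))
  refine ⟨α.trans β, fun s t hst => ?_, α.trans_range β⟩
  rcases eq_or_ends_of_path_trans_eq hα hβ (fun s t h => .inl (hmeet s t h)) hst with
    h | ⟨rfl, rfl⟩ | ⟨rfl, rfl⟩
  exacts [h, absurd hst hne, absurd hst.symm hne]

theorem isSimpleClosedCurve_union (hK : IsArc a b K) (hL : IsArc a b L) (hKL : K ∩ L ⊆ {a, b}) :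
    IsSimpleClosedCurve (K ∪ L) := by
  obtain ⟨α, hα, rfl⟩ := hK
  obtain ⟨β, hβ, rfl⟩ := hL
  have hβ' : Function.Injective β.symm := hβ.comp symm_bijective.injective
  rw [← β.symm_range, ← α.trans_range β.symm]
  refine isSimpleClosedCurve_range_loop _ fun s t =>
    eq_or_ends_of_path_trans_eq hα hβ' fun s t hst => ?_
  rcases hKL ⟨mem_range_self s, ⟨_, hst.symm⟩⟩ with h | h
  · exact .inr ⟨hα (h.trans α.source.symm), hβ' (hst.symm.trans (h.trans β.symm.target.symm))⟩
  · exact .inl (hβ' (hst.symm.trans (h.trans β.symm.source.symm)))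

lemma preimage {X : Type*} [TopologicalSpace X] {ψ : X → T} (hψ : IsEmbedding ψ) {x y : X}
    (hK : IsArc (ψ x) (ψ y) K) (hKψ : K ⊆ range ψ) : IsArc x y (ψ ⁻¹' K) := by
  obtain ⟨γ, hγ, rfl⟩ := hK
  choose g hg using fun t => hKψ (mem_range_self t)
  have hψg : ψ ∘ g = γ := funext hg
  refine ⟨⟨⟨g, hψ.continuous_iff.mpr (hψg ▸ γ.continuous)⟩, hψ.injective ((hg 0).trans γ.source),
    hψ.injective ((hg 1).trans γ.target)⟩, ?_, ?_⟩
  · exact Function.Injective.of_comp (f := ψ) (g := g) (by rwa [hψg])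
  · change range g = ψ ⁻¹' range γ
    rw [← hψg, range_comp, hψ.injective.preimage_image]

end IsArc

lemma isArc_segment {E : Type*} [NormedAddCommGroup E] [NormedSpace ℝ E] {u v : E} (h : u ≠ v) :
    IsArc u v (segment ℝ u v) := by
  refine ⟨⟨⟨fun t => AffineMap.lineMap u v (t : ℝ), by fun_prop⟩, by simp, by simp⟩,
    fun s t hst => Subtype.ext (AffineMap.lineMap_injective ℝ h hst), ?_⟩
  rw [segment_eq_image_lineMap, image_eq_range]
  rfl

end Arcs

section SphereSeparation

variable {T : Type*} [TopologicalSpace T]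

lemma isPreconnected_sdiff_singleton_of_open_nhd [T1Space T] {C W : Set T} {q : T}
    (hC : IsPreconnected C) (hW : IsOpen W) (hqW : q ∈ W) (hWC : W ⊆ C)
    (hWq : IsPreconnected (W \ {q})) : IsPreconnected (C \ {q}) := by
  rw [isPreconnected_iff_subset_of_disjoint]
  intro u v hu hv hcover hdisj
  wlog hWu : W \ {q} ⊆ u generalizing u v
  · have hWv : W \ {q} ⊆ v := by
      refine ((isPreconnected_iff_subset_of_disjoint.mp hWq) u v hu hv
        ((sdiff_subset_sdiff_left hWC).trans hcover) ?_).resolve_left hWu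
      exact subset_empty_iff.mp (hdisj ▸ inter_subset_inter_left _ (sdiff_subset_sdiff_left hWC))
    exact (this v u hv hu (by rwa [union_comm]) (by rwa [inter_comm v u]) hWv).symm
  have hcover' : C ⊆ (u ∪ W) ∪ (v \ {q}) := by
    intro x hx
    by_cases hxq : x = q
    · exact .inl (.inr (hxq ▸ hqW))
    · exact (hcover ⟨hx, hxq⟩).imp .inl fun hxv => ⟨hxv, hxq⟩
  have hdisj' : C ∩ ((u ∪ W) ∩ (v \ {q})) = ∅ := by
    rw [eq_empty_iff_forall_notMem]
    rintro x ⟨hxC, hxuW, hxv, hxq⟩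
    have hxu : x ∈ u := hxuW.elim id fun hxW => hWu ⟨hxW, hxq⟩
    exact (hdisj ▸ show x ∈ C \ {q} ∩ (u ∩ v) from ⟨⟨hxC, hxq⟩, hxu, hxv⟩ : x ∈ (∅ : Set T))
  have hv' : IsOpen (v \ {q}) := hv.sdiff isClosed_singleton
  rcases isPreconnected_iff_subset_of_disjoint.mp hC _ _ (hu.union hW) hv' hcover' hdisj'
    with h | h
  · exact .inl fun x hx => (h hx.1).elim id fun hxW => hWu ⟨hxW, hx.2⟩
  · exact absurd rfl (h (hWC hqW)).2

lemma isPreconnected_ball_sdiff_center {V : Type*} [NormedAddCommGroup V] [InnerProductSpace ℝ V]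
    (hV : 1 < Module.rank ℝ V) (c : V) {r : ℝ} (hr : 0 < r) :
    IsPreconnected (Metric.ball c r \ {c}) := by
  let e := OpenPartialHomeomorph.univBall c r
  have he0 : e 0 = c := OpenPartialHomeomorph.univBall_apply_zero c r
  have heinj : InjOn e univ := OpenPartialHomeomorph.univBall_source c r ▸ e.injOn
  have himage : e '' {0}ᶜ = Metric.ball c r \ {c} := by
    rw [compl_eq_univ_sdiff, heinj.image_sdiff_subset (subset_univ _), image_singleton, he0,
      ← OpenPartialHomeomorph.univBall_source c r, e.image_source_eq_target,
      OpenPartialHomeomorph.univBall_target c hr]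
  rw [← himage]
  refine IsPreconnected.image ?_ e (OpenPartialHomeomorph.continuous_univBall c r).continuousOn
  exact (isConnected_compl_singleton_of_one_lt_rank hV 0).isPreconnected

lemma exists_isOpen_punctured_isPreconnected {ψ : ℂ → T} (hψ : IsOpenEmbedding ψ) {q : T}
    (hq : q ∈ range ψ) {C : Set T} (hC : C ∈ 𝓝 q) :
    ∃ W, IsOpen W ∧ q ∈ W ∧ W ⊆ C ∧ IsPreconnected (W \ {q}) := by
  obtain ⟨z, rfl⟩ := hq
  obtain ⟨r, hr, hball⟩ := Metric.mem_nhds_iff.mp (hψ.continuous.continuousAt hC)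
  refine ⟨ψ '' Metric.ball z r, hψ.isOpenMap _ Metric.isOpen_ball,
    mem_image_of_mem _ (Metric.mem_ball_self hr), image_subset_iff.mpr hball, ?_⟩
  rw [← image_singleton, ← image_sdiff hψ.injective]
  exact (isPreconnected_ball_sdiff_center (by simp [Complex.rank_real_complex]) z hr).image _
    hψ.continuous.continuousOn

-- A point off the two arcs is removed, which turns the problem into one in the plane.
theorem not_isPreconnected_compl_union_arcs [T2Space T]
    (hT : ∀ b : T, ∃ ψ : ℂ → T, IsOpenEmbedding ψ ∧ range ψ = {b}ᶜ) {a b : T} (hab : a ≠ b)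
    {K L : Set T} (hK : IsArc a b K) (hL : IsArc a b L) (hKL : K ∩ L ⊆ {a, b})
    (hne : (K ∪ L)ᶜ.Nonempty) : ¬IsPreconnected (K ∪ L)ᶜ := by
  intro hconn
  obtain ⟨q, hq⟩ := hne
  have hopen : IsOpen (K ∪ L)ᶜ := (hK.isCompact.union hL.isCompact).isClosed.isOpen_compl
  have hKLq : K ∪ L ⊆ {q}ᶜ := fun x hx hxq => hq (hxq ▸ hx)
  obtain ⟨φ, hφ, hφrange⟩ := hT b
  obtain ⟨W, hW, hqW, hWC, hWq⟩ := exists_isOpen_punctured_isPreconnected hφ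
    (hφrange ▸ fun hqb : q = b => hq (.inl (hqb ▸ hK.right_mem))) (hopen.mem_nhds hq)
  have hpunctured := isPreconnected_sdiff_singleton_of_open_nhd hconn hW hqW hWC hWq
  obtain ⟨ψ, hψ, hψrange⟩ := hT q
  rw [← hψrange] at hKLq
  obtain ⟨a', rfl⟩ := hKLq (.inl hK.left_mem)
  obtain ⟨b', rfl⟩ := hKLq (.inl hK.right_mem)
  obtain ⟨α, -, hα⟩ := hK.preimage hψ.isEmbedding (subset_union_left.trans hKLq)
  obtain ⟨β, -, hβ⟩ := hL.preimage hψ.isEmbedding (subset_union_right.trans hKLq)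
  refine not_isPreconnected_compl_union_range_path (ne_of_apply_ne ψ hab) α β ?_ ?_
  · rw [hα, hβ, ← preimage_inter]
    intro z hz
    exact (hKL hz).imp (hψ.injective ·) (hψ.injective ·)
  · rw [hα, hβ, ← preimage_union, ← preimage_compl, ← hψ.isInducing.isPreconnected_image,
      image_preimage_eq_inter_range, hψrange]
    exact hpunctured

end SphereSeparation

section StraightLineDrawings

lemma not_isAcyclic_of_forall_adj_exists_ne {V : Type*} {G : SimpleGraph V} [Finite G.edgeSet]
    (hne : G ≠ ⊥) (hG : ∀ v w, G.Adj v w → ∃ w' ≠ w, G.Adj v w') : ¬G.IsAcyclic := by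
  intro hacyclic
  obtain ⟨a, b, hab⟩ := SimpleGraph.ne_bot_iff_exists_adj.mp hne
  have : Nonempty V := ⟨a⟩
  obtain ⟨u, v, p, hp, hmax⟩ := SimpleGraph.Walk.exists_isPath_forall_isPath_length_le_length G
  have hnil : ¬p.Nil := by
    have h1 := hmax _ _ hab.toWalk (SimpleGraph.Walk.IsPath.of_adj hab)
    rw [SimpleGraph.Walk.length_cons] at h1
    rw [← SimpleGraph.Walk.length_eq_zero_iff]
    omega
  obtain ⟨w, hw, hadj⟩ := hG u p.snd (p.adj_snd hnil)
  by_cases hwp : w ∈ p.support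
  · exact hw (hacyclic.eq_snd_of_adj_start hp hadj hwp)
  · have h2 := hmax _ _ _ (hp.cons (h := hadj.symm) hwp)
    rw [SimpleGraph.Walk.length_cons] at h2
    omega

variable {E : Type*} [NormedAddCommGroup E] [NormedSpace ℝ E]

/-- A graph whose vertices are points of `E` is drawn with straight edges if two of its edges, drawn
as segments, only meet in common endpoints. -/
def IsStraightLineDrawing (G : SimpleGraph E) : Prop :=
  ∀ ⦃u v u' v' : E⦄, G.Adj u v → G.Adj u' v' → s(u, v) ≠ s(u', v') →
    segment ℝ u v ∩ segment ℝ u' v' ⊆ {u, v} ∩ {u', v'}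

/-- The union of the segments traversed by a walk between points of `E`. -/
def walkCarrier {G : SimpleGraph E} {a b : E} (p : G.Walk a b) : Set E :=
  ⋃ d ∈ p.darts, segment ℝ d.fst d.snd

lemma walkCarrier_cons {G : SimpleGraph E} {a b c : E} (h : G.Adj a b) (p : G.Walk b c) :
    walkCarrier (.cons h p) = segment ℝ a b ∪ walkCarrier p := by
  simp only [walkCarrier, SimpleGraph.Walk.darts_cons, List.mem_cons, iUnion_iUnion_eq_or_left]

namespace IsStraightLineDrawing

variable {G : SimpleGraph E}

lemma anti {H : SimpleGraph E} (hG : IsStraightLineDrawing G) (hHG : H ≤ G) :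
    IsStraightLineDrawing H :=
  fun _ _ _ _ h h' => hG (hHG h) (hHG h')

lemma isArc_walkCarrier (hG : IsStraightLineDrawing G) {a b : E} (p : G.Walk a b) (hp : p.IsPath)
    (hab : a ≠ b) : IsArc a b (walkCarrier p) := by
  induction p with
  | nil => exact absurd rfl hab
  | @cons u v w hadj p ih =>
    obtain ⟨hp, hu⟩ := (SimpleGraph.Walk.cons_isPath_iff hadj p).mp hp
    have hsegment : IsArc u v (segment ℝ u v) := isArc_segment hadj.ne
    rw [walkCarrier_cons]
    by_cases hvw : v = w
    · subst hvw
      have hnil : p = .nil := SimpleGraph.Walk.eq_nil_iff_nil.mpr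
        (SimpleGraph.Walk.isPath_iff_nil.mp hp)
      simpa [hnil, walkCarrier] using hsegment
    · refine hsegment.trans (ih hp hvw) ?_
      rintro z ⟨hz, hzp⟩
      obtain ⟨d, hd, hzd⟩ := mem_iUnion₂.mp hzp
      have hud : u ∉ ({d.fst, d.snd} : Set E) := by
        rintro (rfl | h)
        · exact hu (p.dart_fst_mem_support_of_mem_darts hd)
        · exact hu (h ▸ p.dart_snd_mem_support_of_mem_darts hd)
      have hedge : s(u, v) ≠ s(d.fst, d.snd) := fun h => hud (by
        rcases Sym2.eq_iff.mp h with ⟨h, -⟩ | ⟨h, -⟩ <;> simp [h])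
      obtain ⟨rfl | h, hzd'⟩ := hG hadj d.adj hedge ⟨hz, hzd⟩
      exacts [absurd hzd' hud, h]

theorem exists_arcs_of_not_isAcyclic (hG : IsStraightLineDrawing G) (hcycle : ¬G.IsAcyclic) :
    ∃ a b K L, a ≠ b ∧ IsArc a b K ∧ IsArc a b L ∧ K ∩ L ⊆ {a, b} ∧
      K ∪ L ⊆ ⋃ (u) (v) (_ : G.Adj u v), segment ℝ u v := by
  simp only [SimpleGraph.IsAcyclic, not_forall, not_not] at hcycle
  obtain ⟨b, c, hc⟩ := hcycle
  cases c with
  | nil => exact absurd hc SimpleGraph.Walk.not_isCycle_nil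
  | @cons _ a _ hba p =>
    obtain ⟨hp, hedge⟩ := (SimpleGraph.Walk.cons_isCycle_iff p hba).mp hc
    refine ⟨a, b, walkCarrier p, segment ℝ a b, hba.ne', hG.isArc_walkCarrier p hp hba.ne',
      isArc_segment hba.ne', ?_, ?_⟩
    · rintro z ⟨hzp, hz⟩
      obtain ⟨d, hd, hzd⟩ := mem_iUnion₂.mp hzp
      have hne : s(a, b) ≠ s(d.fst, d.snd) := fun h =>
        hedge (Sym2.eq_swap ▸ h ▸ List.mem_map_of_mem hd)
      exact (hG hba.symm d.adj hne ⟨hz, hzd⟩).1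
    · exact union_subset
        (iUnion₂_subset fun d _ =>
          subset_iUnion_of_subset _ (subset_iUnion₂_of_subset _ d.adj le_rfl))
        (subset_iUnion_of_subset _ (subset_iUnion₂_of_subset _ hba.symm le_rfl))

end IsStraightLineDrawing

end StraightLineDrawings

section SegmentComplexes

lemma exists_mem_Ioo_disjoint_of_finite {W : Set ℝ} (hW : W.Finite) {a b t : ℝ} (ha : a ∈ W)
    (hb : b ∈ W) (ht : t ∈ Icc a b) (htW : t ∉ W) :
    ∃ r ∈ W, ∃ s ∈ W, t ∈ Ioo r s ∧ Disjoint (Ioo r s) W := by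
  have hat : a < t := ht.1.lt_of_ne fun h => htW (h ▸ ha)
  have htb : t < b := ht.2.lt_of_ne fun h => htW (h ▸ hb)
  obtain ⟨r, ⟨hrW, hrt⟩, hr⟩ :=
    (W ∩ Iio t).exists_max_image id (hW.subset inter_subset_left) ⟨a, ha, hat⟩
  obtain ⟨s, ⟨hsW, hts⟩, hs⟩ :=
    (W ∩ Ioi t).exists_min_image id (hW.subset inter_subset_left) ⟨b, hb, htb⟩
  refine ⟨r, hrW, s, hsW, ⟨hrt, hts⟩, disjoint_left.mpr fun x hx hxW => ?_⟩
  rcases lt_trichotomy x t with hxt | rfl | hxt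
  · exact hx.1.not_ge (hr x ⟨hxW, hxt⟩)
  · exact htW hxW
  · exact hx.2.not_ge (hs x ⟨hxW, hxt⟩)

lemma mk_eq_mk_of_mem_openSegment_of_disjoint {W : Set ℝ} {r s r' s' t : ℝ} (hr : r ∈ W)
    (hs : s ∈ W) (hr' : r' ∈ W) (hs' : s' ∈ W) (hrs : r ≠ s) (hrs' : r' ≠ s')
    (hW : Disjoint (openSegment ℝ r s) W) (hW' : Disjoint (openSegment ℝ r' s') W)
    (ht : t ∈ openSegment ℝ r s) (ht' : t ∈ openSegment ℝ r' s') : s(r, s) = s(r', s') := by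
  rw [openSegment_eq_Ioo' hrs] at hW ht
  rw [openSegment_eq_Ioo' hrs'] at hW' ht'
  have hmin : min r s ∈ W := by rcases min_choice r s with h | h <;> rwa [h]
  have hmin' : min r' s' ∈ W := by rcases min_choice r' s' with h | h <;> rwa [h]
  have hmax : max r s ∈ W := by rcases max_choice r s with h | h <;> rwa [h]
  have hmax' : max r' s' ∈ W := by rcases max_choice r' s' with h | h <;> rwa [h]
  refine Sym2.inf_eq_inf_and_sup_eq_sup.mp ⟨le_antisymm ?_ ?_, le_antisymm ?_ ?_⟩ <;>
    refine le_of_not_gt fun h => ?_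
  · exact disjoint_left.mp hW' ⟨h, ht.1.trans ht'.2⟩ hmin
  · exact disjoint_left.mp hW ⟨h, ht'.1.trans ht.2⟩ hmin'
  · exact disjoint_left.mp hW ⟨ht.1.trans ht'.2, h⟩ hmax'
  · exact disjoint_left.mp hW' ⟨ht'.1.trans ht.2, h⟩ hmax

lemma eventually_forall_mem_finite_of_isClosed {T ι : Type*} [TopologicalSpace T] {J : Set ι}
    (hJ : J.Finite) {F : ι → Set T} (hF : ∀ i ∈ J, IsClosed (F i)) (z : T) :
    ∀ᶠ x in 𝓝 z, ∀ i ∈ J, x ∈ F i → z ∈ F i := by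
  refine (eventually_all_finite hJ).mpr fun i hi => ?_
  by_cases hz : z ∈ F i
  · exact Eventually.of_forall fun _ _ => hz
  · filter_upwards [(hF i hi).isOpen_compl.mem_nhds hz] with x hx hxF using absurd hxF hx

variable {E : Type*} [NormedAddCommGroup E] [NormedSpace ℝ E]

lemma isClosed_segment (u v : E) : IsClosed (segment ℝ u v) := by
  rw [segment_eq_image_lineMap]
  exact (isCompact_Icc.image AffineMap.lineMap_continuous).isClosed

lemma mem_range_lineMap_of_mem_segment {a b x y z : E} (hz : z ∈ segment ℝ a b)
    (hy : y ∈ segment ℝ a b) (hx : x ∈ segment ℝ a b) (hzy : z ≠ y) :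
    x ∈ range (AffineMap.lineMap (k := ℝ) z y) := by
  have hcollinear : Collinear ℝ (segment ℝ a b) := by
    rw [collinear_iff_of_mem (left_mem_segment ℝ a b), segment_eq_image']
    refine ⟨b - a, forall_mem_image.mpr fun t _ => ⟨t, add_comm _ _⟩⟩
  exact mem_affineSpan_pair_iff_exists_lineMap_eq.mp
    (hcollinear.mem_affineSpan_of_mem_of_ne hz hy hx hzy)

/-- A one-dimensional polyhedral complex in `E`: a finite set `V` of vertices and a graph `G` on
it whose edges, drawn as segments, meet `V` and each other only in their endpoints. The condition
that `G` lives on `V` is stated for one endpoint of each edge, which is enough by symmetry. -/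
structure IsSegmentComplex (V : Set E) (G : SimpleGraph E) : Prop where
  finite : V.Finite
  mem_of_adj {u v : E} : G.Adj u v → u ∈ V
  disjoint {u v : E} : G.Adj u v → Disjoint (openSegment ℝ u v) V
  drawing : IsStraightLineDrawing G

/-- The set of points of a segment complex. -/
def segmentCarrier (V : Set E) (G : SimpleGraph E) : Set E :=
  V ∪ ⋃ (u) (v) (_ : G.Adj u v), segment ℝ u v

/-- The vertices of the arrangement of a finite family of segments: the endpoints of its members
and the isolated crossing points. -/
def arrangementVertices (S : Finset (E × E)) : Set E :=
  (⋃ p ∈ S, {p.1, p.2}) ∪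
    ⋃ p ∈ S, ⋃ q ∈ S, {z | segment ℝ p.1 p.2 ∩ segment ℝ q.1 q.2 = {z}}

/-- The edges of the arrangement of a finite family of segments: the pieces into which the vertices
cut its members. -/
def arrangementGraph (S : Finset (E × E)) : SimpleGraph E where
  Adj u v := u ≠ v ∧ (u ∈ arrangementVertices S ∧ v ∈ arrangementVertices S) ∧
    Disjoint (openSegment ℝ u v) (arrangementVertices S) ∧
    ∃ p ∈ S, segment ℝ u v ⊆ segment ℝ p.1 p.2
  symm := ⟨fun u v ⟨hne, hV, hdisj, hS⟩ =>
    ⟨hne.symm, hV.symm, openSegment_symm ℝ u v ▸ hdisj, segment_symm ℝ u v ▸ hS⟩⟩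

section Arrangement

variable {S : Finset (E × E)}

lemma finite_arrangementVertices (S : Finset (E × E)) : (arrangementVertices S).Finite := by
  refine (S.finite_toSet.biUnion fun p _ => toFinite _).union
    (S.finite_toSet.biUnion fun p _ => S.finite_toSet.biUnion fun q _ => ?_)
  exact Subsingleton.finite fun z hz w hw => singleton_injective (hz.symm.trans hw)

lemma endpoints_mem_arrangementVertices {p : E × E} (hp : p ∈ S) :
    p.1 ∈ arrangementVertices S ∧ p.2 ∈ arrangementVertices S :=
  ⟨.inl (mem_biUnion hp (mem_insert _ _)), .inl (mem_biUnion hp (mem_insert_of_mem _ rfl))⟩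

lemma arrangementVertices_subset : arrangementVertices S ⊆ ⋃ p ∈ S, segment ℝ p.1 p.2 := by
  refine union_subset (iUnion₂_mono fun p _ => insert_subset (left_mem_segment ℝ _ _)
    (singleton_subset_iff.mpr (right_mem_segment ℝ _ _))) (iUnion₂_mono fun p _ => ?_)
  refine iUnion₂_subset fun q _ z hz => ?_
  exact (hz.ge (mem_singleton z)).1

lemma exists_arrangementGraph_adj_mem_openSegment {p : E × E} (hp : p ∈ S) {z : E}
    (hz : z ∈ segment ℝ p.1 p.2) (hzV : z ∉ arrangementVertices S) :
    ∃ u v, (arrangementGraph S).Adj u v ∧ z ∈ openSegment ℝ u v := by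
  obtain ⟨h1, h2⟩ := endpoints_mem_arrangementVertices hp
  set f : ℝ →ᵃ[ℝ] E := AffineMap.lineMap p.1 p.2 with hf
  have hsegment : segment ℝ p.1 p.2 = f '' Icc 0 1 := segment_eq_image_lineMap ℝ _ _
  rw [hsegment] at hz
  obtain ⟨t, ht, rfl⟩ := hz
  have hinj : Function.Injective f := AffineMap.lineMap_injective ℝ fun h => hzV (by
    simpa [hf, h] using h2)
  obtain ⟨r, ⟨hrV, hr⟩, s, ⟨hsV, hs⟩, htrs, hdisj⟩ :=
    exists_mem_Ioo_disjoint_of_finite (W := f ⁻¹' arrangementVertices S ∩ Icc 0 1)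
      (((finite_arrangementVertices S).preimage hinj.injOn).subset inter_subset_left)
      (a := 0) (b := 1) (by simpa [hf] using h1) (by simpa [hf] using h2) ht (fun h => hzV h.1)
  have hrs : r < s := htrs.1.trans htrs.2
  have himage : openSegment ℝ (f r) (f s) = f '' Ioo r s := by
    rw [← image_openSegment, openSegment_eq_Ioo hrs]
  refine ⟨f r, f s, ⟨hinj.ne hrs.ne, ⟨hrV, hsV⟩, ?_, p, hp, ?_⟩,
    himage ▸ mem_image_of_mem f htrs⟩
  · rw [himage, disjoint_image_left]
    exact disjoint_left.mpr fun x hx hxV => disjoint_left.mp hdisj hx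
      ⟨hxV, Ioo_subset_Icc_self.trans (Icc_subset_Icc hr.1 hs.2) hx⟩
  · exact (convex_segment _ _).segment_subset (hsegment ▸ mem_image_of_mem f hr)
      (hsegment ▸ mem_image_of_mem f hs)

lemma arrangementGraph_edge_unique {u v u' v' z : E} (h : (arrangementGraph S).Adj u v)
    (h' : (arrangementGraph S).Adj u' v') (hz : z ∈ openSegment ℝ u v)
    (hz' : z ∈ openSegment ℝ u' v') : s(u, v) = s(u', v') := by
  obtain ⟨hne, ⟨hu, hv⟩, hdisj, p, hp, hsub⟩ := h
  obtain ⟨hne', ⟨hu', hv'⟩, hdisj', q, hq, hsub'⟩ := h'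
  have hzp := hsub (openSegment_subset_segment ℝ u v hz)
  have hzq := hsub' (openSegment_subset_segment ℝ u' v' hz')
  -- Since `z` is not a crossing point, both edges lie on the line through `z` and `y`.
  obtain ⟨y, ⟨hyp, hyq⟩, hzy⟩ : ∃ y ∈ segment ℝ p.1 p.2 ∩ segment ℝ q.1 q.2, z ≠ y := by
    by_contra! hcrossing
    exact disjoint_left.mp hdisj hz (.inr (mem_biUnion hp (mem_biUnion hq
      (subset_antisymm (fun y hy => (hcrossing y hy).symm) (singleton_subset_iff.mpr ⟨hzp, hzq⟩)))))
  set f : ℝ →ᵃ[ℝ] E := AffineMap.lineMap z y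
  have hinj : Function.Injective f := AffineMap.lineMap_injective ℝ hzy
  obtain ⟨r, rfl⟩ := mem_range_lineMap_of_mem_segment hzp hyp (hsub (left_mem_segment ℝ _ _)) hzy
  obtain ⟨s, rfl⟩ := mem_range_lineMap_of_mem_segment hzp hyp (hsub (right_mem_segment ℝ _ _)) hzy
  obtain ⟨r', rfl⟩ := mem_range_lineMap_of_mem_segment hzq hyq (hsub' (left_mem_segment ℝ _ _)) hzy
  obtain ⟨s', rfl⟩ := mem_range_lineMap_of_mem_segment hzq hyq (hsub' (right_mem_segment ℝ _ _)) hzy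
  have hopen {r s : ℝ} (h : z ∈ openSegment ℝ (f r) (f s)) : 0 ∈ openSegment ℝ r s := by
    rw [← image_openSegment] at h
    obtain ⟨t, ht, htz⟩ := h
    exact hinj (htz.trans (AffineMap.lineMap_apply_zero z y).symm) ▸ ht
  rw [← image_openSegment, disjoint_image_left] at hdisj hdisj'
  exact congrArg (Sym2.map f) (mk_eq_mk_of_mem_openSegment_of_disjoint hu hv hu' hv'
    (ne_of_apply_ne f hne) (ne_of_apply_ne f hne') hdisj hdisj' (hopen hz) (hopen hz'))

lemma isStraightLineDrawing_arrangementGraph : IsStraightLineDrawing (arrangementGraph S) := by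
  intro u v u' v' h h' hne z ⟨hz, hz'⟩
  rw [← insert_endpoints_openSegment] at hz hz'
  have hend {a b : E} (hab : (arrangementGraph S).Adj a b)
      (hzab : z ∈ insert a (insert b (openSegment ℝ a b))) (hz : z ∈ arrangementVertices S) :
      z ∈ ({a, b} : Set E) := by
    rcases hzab with rfl | rfl | hzab
    exacts [.inl rfl, .inr rfl, absurd hz (disjoint_left.mp hab.2.2.1 hzab)]
  by_cases hzmem : z ∈ arrangementVertices S
  · exact ⟨hend h hz hzmem, hend h' hz' hzmem⟩
  · have hopen {a b : E} (hab : (arrangementGraph S).Adj a b)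
        (hzab : z ∈ insert a (insert b (openSegment ℝ a b))) : z ∈ openSegment ℝ a b := by
      rcases hzab with rfl | rfl | hzab
      exacts [absurd hab.2.1.1 hzmem, absurd hab.2.1.2 hzmem, hzab]
    exact absurd (arrangementGraph_edge_unique h h' (hopen h hz) (hopen h' hz')) hne

lemma isSegmentComplex_arrangement (S : Finset (E × E)) :
    IsSegmentComplex (arrangementVertices S) (arrangementGraph S) where
  finite := finite_arrangementVertices S
  mem_of_adj h := h.2.1.1
  disjoint h := h.2.2.1
  drawing := isStraightLineDrawing_arrangementGraph

lemma segmentCarrier_arrangement (S : Finset (E × E)) :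
    segmentCarrier (arrangementVertices S) (arrangementGraph S) = ⋃ p ∈ S, segment ℝ p.1 p.2 := by
  refine subset_antisymm (union_subset arrangementVertices_subset ?_) ?_
  · refine iUnion₂_subset fun u v => iUnion_subset fun ⟨_, _, _, p, hp, hsub⟩ => ?_
    exact hsub.trans (subset_biUnion_of_mem (u := fun p : E × E => segment ℝ p.1 p.2) hp)
  · refine iUnion₂_subset fun p hp z hz => or_iff_not_imp_left.mpr fun hzV => ?_
    obtain ⟨u, v, hadj, hzuv⟩ := exists_arrangementGraph_adj_mem_openSegment hp hz hzV
    exact mem_iUnion₂.mpr ⟨u, v, mem_iUnion.mpr ⟨hadj, openSegment_subset_segment ℝ u v hzuv⟩⟩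

end Arrangement

namespace IsSegmentComplex

variable {V : Set E} {G : SimpleGraph E}

lemma finite_edgeSet (h : IsSegmentComplex V G) : G.edgeSet.Finite := by
  refine ((h.finite.prod h.finite).image fun p : E × E => s(p.1, p.2)).subset fun e he => ?_
  induction e with
  | _ u v => exact ⟨(u, v), ⟨h.mem_of_adj he, h.mem_of_adj he.symm⟩, rfl⟩

lemma mem_endpoints (h : IsSegmentComplex V G) {u v p : E} (huv : G.Adj u v) (hp : p ∈ V)
    (hpuv : p ∈ segment ℝ u v) : p = u ∨ p = v := by
  rw [← insert_endpoints_openSegment] at hpuv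
  rcases hpuv with rfl | rfl | hpuv
  exacts [.inl rfl, .inr rfl, absurd hp (disjoint_left.mp (h.disjoint huv) hpuv)]

lemma eventually_mem_segment (h : IsSegmentComplex V G) (z : E) :
    ∀ᶠ x in 𝓝 z, ∀ u v, G.Adj u v → x ∈ segment ℝ u v → z ∈ segment ℝ u v := by
  filter_upwards [eventually_forall_mem_finite_of_isClosed (h.finite.prod h.finite)
    (fun p _ => isClosed_segment p.1 p.2) z] with x hx u v huv
  exact hx (u, v) ⟨h.mem_of_adj huv, h.mem_of_adj huv.symm⟩

lemma eventually_mem_segment_of_mem_segmentCarrier (h : IsSegmentComplex V G) {u v z : E}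
    (huv : G.Adj u v) (hz : z ∈ openSegment ℝ u v) :
    ∀ᶠ x in 𝓝 z, x ∈ segmentCarrier V G → x ∈ segment ℝ u v := by
  have hzV : z ∉ V := disjoint_left.mp (h.disjoint huv) hz
  filter_upwards [h.eventually_mem_segment z, h.finite.isClosed.isOpen_compl.mem_nhds hzV]
    with x hsegment hxV
  rintro (hx | hx)
  · exact absurd hx hxV
  · simp only [mem_iUnion] at hx
    obtain ⟨u', v', huv', hx⟩ := hx
    by_cases hne : s(u, v) = s(u', v')
    · rcases Sym2.eq_iff.mp hne with ⟨rfl, rfl⟩ | ⟨rfl, rfl⟩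
      exacts [hx, segment_symm ℝ u v ▸ hx]
    · obtain ⟨rfl | rfl, -⟩ := h.drawing huv huv' hne
        ⟨openSegment_subset_segment ℝ u v hz, hsegment u' v' huv' hx⟩
      exacts [absurd (h.mem_of_adj huv) hzV, absurd (h.mem_of_adj huv.symm) hzV]

lemma eventually_eq_or_mem_openSegment (h : IsSegmentComplex V G) {p : E} (hp : p ∈ V) :
    ∀ᶠ x in 𝓝 p, x ∈ segmentCarrier V G → x = p ∨ ∃ w, G.Adj p w ∧ x ∈ openSegment ℝ p w := by
  have hV : ∀ᶠ x in 𝓝 p, x ∈ V → x = p := by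
    filter_upwards [eventually_forall_mem_finite_of_isClosed h.finite
      (fun q _ => isClosed_singleton (x := q)) p] with x hx hxV using (hx x hxV rfl).symm
  filter_upwards [h.eventually_mem_segment p, hV] with x hsegment hxV hx
  refine or_iff_not_imp_left.mpr fun hxp => ?_
  have hx' := hx.resolve_left (mt hxV hxp)
  simp only [mem_iUnion] at hx'
  obtain ⟨u, v, huv, hxuv⟩ := hx'
  have hxopen : x ∈ openSegment ℝ u v := by
    rw [← insert_endpoints_openSegment] at hxuv
    rcases hxuv with rfl | rfl | hxuv
    exacts [absurd (hxV (h.mem_of_adj huv)) hxp, absurd (hxV (h.mem_of_adj huv.symm)) hxp, hxuv]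
  rcases h.mem_endpoints huv hp (hsegment u v huv hxuv) with rfl | rfl
  exacts [⟨v, huv, hxopen⟩, ⟨u, huv.symm, openSegment_symm ℝ u p ▸ hxopen⟩]

end IsSegmentComplex

end SegmentComplexes

section LocalSides

variable {T : Type*} [TopologicalSpace T] {F D S : Set T} {p : T} {n : ℕ}

lemma subset_of_isPreconnected_of_disjoint_frontier (hS : IsPreconnected S) (hD : IsOpen D)
    (hDS : Disjoint (frontier D) S) (hne : (S ∩ D).Nonempty) : S ⊆ D := by
  have : PreconnectedSpace S := isPreconnected_iff_preconnectedSpace.mp hS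
  obtain ⟨x, hxS, hxD⟩ := hne
  simpa [preimage_eq_univ_iff] using
    (isClopen_preimage_val hD hDS).eq_univ ⟨⟨x, hxS⟩, hxD⟩

lemma exists_subset_of_iUnion_closure_mem_nhds {ι : Type*} {S : ι → Set T}
    (hS : ∀ i, IsPreconnected (S i)) (hnhds : (⋃ i, closure (S i)) ∈ 𝓝 p) (hD : IsOpen D)
    (hDS : ∀ i, Disjoint (frontier D) (S i)) (hp : p ∈ closure D) :
    ∃ i, (S i).Nonempty ∧ S i ⊆ D := by
  obtain ⟨x, hx, hxD⟩ := mem_closure_iff_nhds.mp hp _ hnhds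
  obtain ⟨i, hi⟩ := mem_iUnion.mp hx
  obtain ⟨z, hzD, hzS⟩ := mem_closure_iff.mp hi D hD hxD
  exact ⟨i, ⟨z, hzS⟩,
    subset_of_isPreconnected_of_disjoint_frontier (hS i) hD (hDS i) ⟨z, hzS, hzD⟩⟩

/-- The set `F` has at most `n` local sides at `p`: arbitrarily close to `p` there are `n` connected
pieces of the complement of `F` whose closures cover a neighbourhood of `p`, and near `p` every
point of `F` is adherent to each of them. The pieces need not be disjoint, so that this is only an
upper bound on the number of sides. -/
def HasLocalSides (n : ℕ) (F : Set T) (p : T) : Prop :=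
  ∀ O ∈ 𝓝 p, ∃ S : Fin n → Set T, (∀ i, IsPreconnected (S i) ∧ S i ⊆ O \ F) ∧
    (⋃ i, closure (S i)) ∈ 𝓝 p ∧ ∀ᶠ x in 𝓝 p, x ∈ F → ∀ i, x ∈ closure (S i)

namespace HasLocalSides

lemma anti {F' : Set T} (h : HasLocalSides n F p) (hF : ∀ᶠ x in 𝓝 p, x ∈ F' → x ∈ F) :
    HasLocalSides n F' p := by
  intro O hO
  obtain ⟨S, hS, hnhds, hclosure⟩ := h _ (inter_mem hO hF)
  refine ⟨S, fun i => ⟨(hS i).1, fun x hx => ?_⟩, hnhds, ?_⟩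
  · obtain ⟨⟨hxO, hxF⟩, hx⟩ := (hS i).2 hx
    exact ⟨hxO, mt hxF hx⟩
  · filter_upwards [hF, hclosure] with x hxF hx hxF' using hx (hxF hxF')

theorem card_le (h : HasLocalSides n F p) {ι : Type*} [Fintype ι] {D : ι → Set T}
    (hopen : ∀ j, IsOpen (D j)) (hfrontier : ∀ j, frontier (D j) ⊆ F)
    (hdisj : Pairwise (Function.onFun Disjoint D)) (hp : ∀ j, p ∈ closure (D j)) :
    Fintype.card ι ≤ n := by
  obtain ⟨S, hS, hnhds, -⟩ := h univ univ_mem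
  have hside (j : ι) : ∃ i, (S i).Nonempty ∧ S i ⊆ D j :=
    exists_subset_of_iUnion_closure_mem_nhds (fun i => (hS i).1) hnhds (hopen j)
      (fun i => disjoint_left.mpr fun _ hx hxS => ((hS i).2 hxS).2 (hfrontier j hx)) (hp j)
  choose side hne hsub using hside
  have hinj : Function.Injective side := fun j k hjk => by
    by_contra hne'
    obtain ⟨x, hx⟩ := hne j
    exact disjoint_left.mp (hdisj hne') (hsub j hx) (hsub k (hjk ▸ hx))
  simpa using Fintype.card_le_of_injective side hinj

lemma not_one_of_mem_frontier (hD : IsOpen D) (hDD : frontier D ⊆ closure (closure D)ᶜ)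
    (hp : p ∈ frontier D) : ¬HasLocalSides 1 (frontier D) p := by
  intro h
  have hdisj : Pairwise (Function.onFun Disjoint ![D, (closure D)ᶜ]) := by
    have : Disjoint D (closure D)ᶜ := disjoint_compl_right_iff_subset.mpr subset_closure
    simpa [Pairwise, Fin.forall_fin_two, Function.onFun, this] using this.symm
  have hcard := h.card_le (D := ![D, (closure D)ᶜ])
    (Fin.forall_fin_two.mpr ⟨hD, isClosed_closure.isOpen_compl⟩)
    (Fin.forall_fin_two.mpr ⟨subset_rfl, (frontier_compl _).trans_subset frontier_closure_subset⟩)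
    hdisj (Fin.forall_fin_two.mpr ⟨frontier_subset_closure hp, hDD hp⟩)
  simp at hcard

lemma eventually_mem_frontier (h : HasLocalSides n F p) (hD : IsOpen D) (hDF : Disjoint D F)
    (hfrontier : frontier D ⊆ F) (hp : p ∈ frontier D) : ∀ᶠ x in 𝓝 p, x ∈ F → x ∈ frontier D := by
  obtain ⟨S, hS, hnhds, hclosure⟩ := h univ univ_mem
  obtain ⟨i, -, hi⟩ := exists_subset_of_iUnion_closure_mem_nhds (fun i => (hS i).1) hnhds hD
    (fun i => disjoint_left.mpr fun _ hx hxS => ((hS i).2 hxS).2 (hfrontier hx))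
    (frontier_subset_closure hp)
  filter_upwards [hclosure] with x hx hxF
  exact hD.frontier_eq ▸ ⟨closure_mono hi (hx hxF i), disjoint_right.mp hDF hxF⟩

end HasLocalSides

lemma subset_frontier_of_forall_hasLocalSides (hS : IsPreconnected S) (hSF : S ⊆ F)
    (hsides : ∀ p ∈ S, HasLocalSides n F p) (hD : IsOpen D) (hDF : Disjoint D F)
    (hfrontier : frontier D ⊆ F) (hne : (S ∩ frontier D).Nonempty) : S ⊆ frontier D := by
  have : PreconnectedSpace S := isPreconnected_iff_preconnectedSpace.mp hS
  have hopen : IsOpen ((↑) ⁻¹' frontier D : Set S) := by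
    refine isOpen_iff_mem_nhds.mpr fun p hp => ?_
    filter_upwards [continuousAt_subtype_val.eventually
      ((hsides p p.2).eventually_mem_frontier hD hDF hfrontier hp)] with x hx using hx (hSF x.2)
  obtain ⟨x, hxS, hx⟩ := hne
  simpa [preimage_eq_univ_iff] using IsClopen.eq_univ
    ⟨isClosed_frontier.preimage continuous_subtype_val, hopen⟩ ⟨⟨x, hxS⟩, hx⟩

end LocalSides

section Components

variable {T : Type*} [TopologicalSpace T] {U Λ D Z : Set T} {x y : T}

lemma disjoint_connectedComponentIn_of_ne
    (h : connectedComponentIn U x ≠ connectedComponentIn U y) :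
    Disjoint (connectedComponentIn U x) (connectedComponentIn U y) :=
  disjoint_left.mpr fun _ hx hy =>
    h ((connectedComponentIn_eq hx).trans (connectedComponentIn_eq hy).symm)

lemma frontier_connectedComponentIn_subset [LocallyConnectedSpace T] (hU : IsOpen U) (x : T) :
    frontier (connectedComponentIn U x) ⊆ frontier U := by
  rw [hU.frontier_eq, (hU.connectedComponentIn (x := x)).frontier_eq]
  rintro y ⟨hy, hyx⟩
  refine ⟨closure_mono (connectedComponentIn_subset U x) hy, fun hyU => hyx ?_⟩
  have hymem := mem_connectedComponentIn hyU
  obtain ⟨z, hzy, hzx⟩ := mem_closure_iff.mp hy _ hU.connectedComponentIn hymem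
  rwa [connectedComponentIn_eq hzx, ← connectedComponentIn_eq hzy]

lemma frontier_subset_closure_compl_closure (hΛ : Λ = closure (interior Λ)) (hDΛ : Disjoint D Λ)
    (hfrontier : frontier D ⊆ Λ) : frontier D ⊆ closure (closure D)ᶜ := by
  refine hfrontier.trans (hΛ.subset.trans (closure_mono (disjoint_left.mp ?_)))
  exact ((hDΛ.mono_right interior_subset).closure_left isOpen_interior).symm

/-- `D` is a face of the partition of the space cut out by `F`: an open set away from `F` which is
bounded by `F` and does not lie on both sides of its frontier. Faces need not be connected. -/
structure IsFace (F D : Set T) : Prop where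
  isOpen : IsOpen D
  disjoint : Disjoint D F
  frontier_subset : frontier D ⊆ F
  frontier_subset_closure_compl_closure : frontier D ⊆ closure (closure D)ᶜ

lemma isFace_connectedComponentIn [LocallyConnectedSpace T] (hΛ : Λ = closure (interior Λ))
    (x : T) : IsFace (frontier Λ) (connectedComponentIn Λᶜ x) := by
  have hclosed : IsClosed Λ := hΛ ▸ isClosed_closure
  have hdisj : Disjoint (connectedComponentIn Λᶜ x) Λ :=
    disjoint_left.mpr fun _ hz => connectedComponentIn_subset _ _ hz
  have hfrontier : frontier (connectedComponentIn Λᶜ x) ⊆ frontier Λ :=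
    frontier_compl Λ ▸ frontier_connectedComponentIn_subset hclosed.isOpen_compl x
  exact ⟨hclosed.isOpen_compl.connectedComponentIn, hdisj.mono_right hclosed.frontier_subset,
    hfrontier, frontier_subset_closure_compl_closure hΛ hdisj
      (hfrontier.trans hclosed.frontier_subset)⟩

-- Every point of `Zᶜ` is joined to `interior Λ`, directly if it lies in `Λ`, and otherwise through
-- a frontier point of its component that avoids `Z`.
theorem isPreconnected_compl_of_forall_not_frontier_subset [LocallyConnectedSpace T]
    (hΛ : Λ = closure (interior Λ)) (hconn : IsPreconnected (interior Λ)) (hne : Λ.Nonempty)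
    (hZ : Z ⊆ frontier Λ) (h : ∀ y ∈ Λᶜ, ¬frontier (connectedComponentIn Λᶜ y) ⊆ Z) :
    IsPreconnected Zᶜ := by
  have hclosed : IsClosed Λ := hΛ ▸ isClosed_closure
  obtain ⟨l, hl⟩ : (interior Λ).Nonempty := closure_nonempty_iff.mp (hΛ ▸ hne)
  have hintZ : interior Λ ⊆ Zᶜ := fun x hx hxZ => (hZ hxZ).2 hx
  have hinsert {z : T} (hz : z ∈ Λ) : IsPreconnected (insert z (interior Λ)) :=
    hconn.subset_closure (subset_insert _ _)
      (insert_subset (hΛ ▸ hz) subset_closure)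
  refine isPreconnected_of_forall l fun y hy => ?_
  by_cases hyΛ : y ∈ Λ
  · exact ⟨insert y (interior Λ), insert_subset hy hintZ, .inr hl, .inl rfl, hinsert hyΛ⟩
  obtain ⟨z, hz, hzZ⟩ := not_subset.mp (h y hyΛ)
  have hzΛ : z ∈ Λ := hclosed.frontier_subset
    ((isFace_connectedComponentIn hΛ y).frontier_subset hz)
  have hcomponent : IsPreconnected (insert z (connectedComponentIn Λᶜ y)) :=
    isPreconnected_connectedComponentIn.subset_closure (subset_insert _ _)
      (insert_subset (frontier_subset_closure hz) subset_closure)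
  refine ⟨insert z (interior Λ) ∪ insert z (connectedComponentIn Λᶜ y), ?_, .inl (.inr hl),
    .inr (.inr (mem_connectedComponentIn hyΛ)),
    (hinsert hzΛ).union z (.inl rfl) (.inl rfl) hcomponent⟩
  exact union_subset (insert_subset hzZ hintZ) (insert_subset hzZ fun w hw hwZ =>
    connectedComponentIn_subset _ _ hw (hclosed.frontier_subset (hZ hwZ)))

end Components

section RadialProjection

variable {E : Type*} [NormedAddCommGroup E] [NormedSpace ℝ E]

lemma mem_closure_inter_preimage {T T' : Type*} [TopologicalSpace T] [TopologicalSpace T']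
    {f : T → T'} (hopen : IsOpenMap f) (hcont : Continuous f) {B : Set T} {C : Set T'} {x : T}
    (hB : IsOpen B) (hx : x ∈ B) (hfx : f x ∈ closure C) : x ∈ closure (B ∩ f ⁻¹' C) :=
  hB.inter_closure ⟨hx, hopen.preimage_closure_eq_closure_preimage hcont C ▸ hfx⟩

lemma exists_dual_pair_of_linearIndependent (hE : Module.finrank ℝ E = 3) {a b : E}
    (hab : LinearIndependent ℝ ![a, b]) :
    ∃ f g : E →L[ℝ] ℝ, Function.Surjective (f.prod g) ∧ f a = 0 ∧ f b = 0 ∧ g a = 0 ∧ g b = 1 := by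
  have : FiniteDimensional ℝ E := .of_finrank_pos (by lia)
  obtain ⟨c, hc⟩ := exists_linearIndependent_cons_of_lt_finrank hab (by lia)
  let β := basisOfLinearIndependentOfCardEqFinrank hc (by simp [hE])
  have hβc : β 0 = c := by simp [β]
  have hβa : β 1 = a := by simp [β]
  have hβb : β 2 = b := by simp [β]
  refine ⟨(β.coord 0).toContinuousLinearMap, (β.coord 2).toContinuousLinearMap,
    fun z => ⟨z.1 • c + z.2 • b, ?_⟩, ?_⟩
  · ext <;> simp [← hβb, ← hβc]
  · simp [← hβb, ← hβa]

lemma ne_zero_of_surjective_prod {f g : E →L[ℝ] ℝ} (hfg : Function.Surjective (f.prod g)) :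
    f ≠ 0 := by
  rintro rfl
  obtain ⟨x, hx⟩ := hfg (1, 0)
  simp at hx

-- The complement of the slit is the union of the two half-spaces cut out by `f` and of the
-- half-space where `g` is small, which meets both of them.
lemma isPreconnected_sdiff_slit [CompleteSpace E] {f g : E →L[ℝ] ℝ}
    (hfg : Function.Surjective (f.prod g)) {B : Set E} (hB : Convex ℝ B) (hopen : IsOpen B) {p : E}
    (hp : p ∈ B) : IsPreconnected (B \ {x | f x = f p ∧ g p ≤ g x}) := by
  have hpreconn {C : Set (ℝ × ℝ)} (hC : Convex ℝ C) : IsPreconnected (B ∩ f.prod g ⁻¹' C) :=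
    (hB.inter (hC.linear_preimage (f.prod g).toLinearMap)).isPreconnected
  have hne {C : Set (ℝ × ℝ)} (hC : (f p, g p) ∈ closure C) : (B ∩ f.prod g ⁻¹' C).Nonempty :=
    closure_nonempty_iff.mp ⟨p, mem_closure_inter_preimage ((f.prod g).isOpenMap hfg)
      (f.prod g).continuous hopen hp hC⟩
  obtain ⟨y, hyB, hy⟩ := hne (C := Ioi (f p) ×ˢ Iio (g p)) (by simp [closure_prod_eq])
  obtain ⟨z, hzB, hz⟩ := hne (C := Iio (f p) ×ˢ Iio (g p)) (by simp [closure_prod_eq])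
  have hunion : B \ {x | f x = f p ∧ g p ≤ g x} =
      B ∩ f.prod g ⁻¹' (Ioi (f p) ×ˢ univ) ∪ B ∩ f.prod g ⁻¹' (univ ×ˢ Iio (g p)) ∪
        B ∩ f.prod g ⁻¹' (Iio (f p) ×ˢ univ) := by
    ext x
    simp only [Set.mem_sdiff, mem_ofPred_eq, mem_union, mem_inter_iff, mem_preimage,
      ContinuousLinearMap.prod_apply, mem_prod, mem_Ioi, mem_Iio, mem_univ, and_true, true_and]
    grind
  rw [hunion]
  refine IsPreconnected.union z (.inr ⟨hzB, trivial, hz.2⟩) ⟨hzB, hz.1, trivial⟩ ?_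
    (hpreconn ((convex_Iio _).prod convex_univ))
  exact IsPreconnected.union y ⟨hyB, hy.1, trivial⟩ ⟨hyB, trivial, hy.2⟩
    (hpreconn ((convex_Ioi _).prod convex_univ)) (hpreconn (convex_univ.prod (convex_Iio _)))

/-- `ρ` is the radial projection with centre `o` onto the surface `X`: every ray issuing from `o`
meets `X` in exactly one point, to which `ρ` sends the whole open ray. The value `ρ o` is
arbitrary. -/
structure IsRadialProjection (o : E) {X : Set E} (ρ : E → X) : Prop where
  center_notMem : o ∉ X
  continuousOn : ContinuousOn ρ {o}ᶜ
  sameRay (y : E) : SameRay ℝ (y - o) (ρ y - o)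
  eq_of_sameRay {y : E} {x : X} (hy : y ≠ o) (h : SameRay ℝ (y - o) (x - o)) : ρ y = x

namespace IsRadialProjection

variable {o : E} {X : Set E} {ρ : E → X}

lemma coe_ne_center (hρ : IsRadialProjection o ρ) (x : X) : (x : E) ≠ o :=
  fun h => hρ.center_notMem (h ▸ x.2)

lemma apply_coe (hρ : IsRadialProjection o ρ) (x : X) : ρ x = x :=
  hρ.eq_of_sameRay (hρ.coe_ne_center x) .rfl

lemma continuousAt_coe (hρ : IsRadialProjection o ρ) (x : X) : ContinuousAt ρ x :=
  hρ.continuousOn.continuousAt (isOpen_compl_singleton.mem_nhds (hρ.coe_ne_center x))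

lemma mem_closure_image (hρ : IsRadialProjection o ρ) {A : Set E} {x : X}
    (hx : (x : E) ∈ closure A) : x ∈ closure (ρ '' A) := by
  simpa only [hρ.apply_coe] using _root_.mem_closure_image (hρ.continuousAt_coe x) hx

lemma isPreconnected_image (hρ : IsRadialProjection o ρ) {A : Set E} (hA : IsPreconnected A)
    (ho : o ∉ A) : IsPreconnected (ρ '' A) :=
  hA.image ρ (hρ.continuousOn.mono (subset_compl_singleton_iff.mpr ho))

lemma exists_ball (hρ : IsRadialProjection o ρ) (p : X) {O : Set X} (hO : O ∈ 𝓝 p) :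
    ∃ r > 0, o ∉ Metric.ball (p : E) r ∧ MapsTo ρ (Metric.ball (p : E) r) O := by
  have hpre : ρ ⁻¹' O ∈ 𝓝 (p : E) := hρ.continuousAt_coe p (by rwa [hρ.apply_coe])
  obtain ⟨r, hr, hball⟩ := Metric.mem_nhds_iff.mp
    (inter_mem hpre (isOpen_compl_singleton.mem_nhds (hρ.coe_ne_center p)))
  exact ⟨r, hr, fun h => (hball h).2 rfl, fun _ hy => (hball hy).1⟩

lemma le_map_coe_iff (hρ : IsRadialProjection o ρ) {y : E} (hy : y ≠ o) (f : E →L[ℝ] ℝ) :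
    f o ≤ f (ρ y) ↔ f o ≤ f y := by
  obtain ⟨s, t, hs, ht, hst⟩ :=
    (hρ.sameRay y).exists_pos (sub_ne_zero.mpr hy) (sub_ne_zero.mpr (hρ.coe_ne_center _))
  have hf : s * (f y - f o) = t * (f (ρ y) - f o) := by simpa using congrArg f hst
  rw [← sub_nonneg, ← sub_nonneg (b := f o), ← mul_nonneg_iff_of_pos_left ht, ← hf,
    mul_nonneg_iff_of_pos_left hs]

lemma map_coe_eq_iff (hρ : IsRadialProjection o ρ) {y : E} (hy : y ≠ o) (f : E →L[ℝ] ℝ) :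
    f (ρ y) = f o ↔ f y = f o := by
  have hneg := hρ.le_map_coe_iff hy (-f)
  simp only [neg_apply, neg_le_neg_iff] at hneg
  rw [le_antisymm_iff, le_antisymm_iff, hneg, hρ.le_map_coe_iff hy f]

lemma linearIndependent_sub_of_segment_subset (hρ : IsRadialProjection o ρ) {u v : E} (huv : u ≠ v)
    (h : segment ℝ u v ⊆ X) : LinearIndependent ℝ ![u - o, v - o] := by
  have hu := h (left_mem_segment ℝ u v)
  have hv := h (right_mem_segment ℝ u v)
  by_contra hli
  rcases sameRay_or_sameRay_neg_iff_not_linearIndependent.mpr hli with hray | hray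
  · have := hρ.eq_of_sameRay (x := ⟨v, hv⟩) (hρ.coe_ne_center ⟨u, hu⟩) hray
    rw [hρ.apply_coe ⟨u, hu⟩] at this
    exact huv (congrArg Subtype.val this)
  · refine hρ.center_notMem (h (mem_segment_iff_sameRay.mpr ?_))
    rwa [← sameRay_neg_iff, neg_sub]

theorem hasLocalSides_two (hρ : IsRadialProjection o ρ) {f : E →L[ℝ] ℝ} (hf : f ≠ 0) (p : X) :
    HasLocalSides 2 {x : X | f x = f o} p := by
  intro O hO
  obtain ⟨r, hr, ho, hmaps⟩ := hρ.exists_ball p hO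
  set B := Metric.ball (p : E) r
  have hpiece {C : Set ℝ} (hC : Convex ℝ C) (hoC : f o ∉ C) :
      IsPreconnected (ρ '' (B ∩ f ⁻¹' C)) ∧ ρ '' (B ∩ f ⁻¹' C) ⊆ O \ {x : X | f x = f o} := by
    refine ⟨hρ.isPreconnected_image ((convex_ball _ _).inter
      (hC.linear_preimage f.toLinearMap)).isPreconnected fun h => ho h.1, ?_⟩
    rintro _ ⟨y, ⟨hyB, hyC⟩, rfl⟩
    refine ⟨hmaps hyB, fun hy => hoC ?_⟩
    rwa [← (hρ.map_coe_eq_iff (ne_of_mem_of_not_mem hyB ho) f).mp hy]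
  have hclosure {C : Set ℝ} {x : X} (hxB : (x : E) ∈ B) (hxC : f x ∈ closure C) :
      x ∈ closure (ρ '' (B ∩ f ⁻¹' C)) :=
    hρ.mem_closure_image (mem_closure_inter_preimage (f.isOpenMap_of_ne_zero hf) f.continuous
      Metric.isOpen_ball hxB hxC)
  have hB : ∀ᶠ x : X in 𝓝 p, (x : E) ∈ B :=
    continuousAt_subtype_val.eventually (Metric.ball_mem_nhds _ hr)
  refine ⟨![ρ '' (B ∩ f ⁻¹' Ioi (f o)), ρ '' (B ∩ f ⁻¹' Iio (f o))], Fin.forall_fin_two.mpr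
    ⟨hpiece (convex_Ioi _) self_notMem_Ioi, hpiece (convex_Iio _) self_notMem_Iio⟩, ?_, ?_⟩
  · filter_upwards [hB] with x hxB
    rcases le_total (f o) (f x) with hx | hx
    · exact mem_iUnion.mpr ⟨0, hclosure hxB (by rwa [closure_Ioi])⟩
    · exact mem_iUnion.mpr ⟨1, hclosure hxB (by rwa [closure_Iio])⟩
  · filter_upwards [hB] with x hxB hx
    exact Fin.forall_fin_two.mpr ⟨hclosure hxB (by rw [closure_Ioi]; exact hx.ge),
      hclosure hxB (by rw [closure_Iio]; exact hx.le)⟩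

theorem hasLocalSides_one [CompleteSpace E] (hρ : IsRadialProjection o ρ) {f g : E →L[ℝ] ℝ}
    (hfg : Function.Surjective (f.prod g)) {p : X} (hfp : f p = f o) (hgp : g p = g o) :
    HasLocalSides 1 {x : X | f x = f o ∧ g o ≤ g x} p := by
  intro O hO
  obtain ⟨r, hr, ho, hmaps⟩ := hρ.exists_ball p hO
  set B := Metric.ball (p : E) r
  set A := B \ {x | f x = f o ∧ g o ≤ g x}
  have hpB : (p : E) ∈ B := Metric.mem_ball_self hr
  have hA : IsPreconnected A := by
    simpa only [hfp, hgp] using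
      isPreconnected_sdiff_slit hfg (convex_ball (p : E) r) Metric.isOpen_ball hpB
  have hnhds : closure (ρ '' A) ∈ 𝓝 p := by
    filter_upwards [continuousAt_subtype_val.eventually (Metric.ball_mem_nhds (p : E) hr)]
      with x hxB
    have hx := mem_closure_inter_preimage (C := {f o}ᶜ)
      (f.isOpenMap_of_ne_zero (ne_zero_of_surjective_prod hfg)) f.continuous Metric.isOpen_ball hxB
      (by simp [(dense_compl_singleton (f o)).closure_eq])
    exact hρ.mem_closure_image (closure_mono (sdiff_subset_sdiff_right fun _ hw => hw.1) hx)
  refine ⟨fun _ => ρ '' A, fun _ => ⟨hρ.isPreconnected_image hA fun h => ho h.1, ?_⟩,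
    by rwa [iUnion_const], by filter_upwards [hnhds] with x hx _ _ using hx⟩
  rintro _ ⟨w, ⟨hwB, hw⟩, rfl⟩
  have hwo : w ≠ o := ne_of_mem_of_not_mem hwB ho
  exact ⟨hmaps hwB, fun ⟨hwf, hwg⟩ =>
    hw ⟨(hρ.map_coe_eq_iff hwo f).mp hwf, (hρ.le_map_coe_iff hwo g).mp hwg⟩⟩

end IsRadialProjection

end RadialProjection

section SegmentComplexesOnSurfaces

variable {E : Type*} [NormedAddCommGroup E] [NormedSpace ℝ E] {o : E} {X : Set E} {ρ : E → X}

namespace IsRadialProjection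

lemma hasLocalSides_two_segment (hρ : IsRadialProjection o ρ) (hE : Module.finrank ℝ E = 3)
    {u v : E} (huv : u ≠ v) (hX : segment ℝ u v ⊆ X) (p : X) :
    HasLocalSides 2 ((↑) ⁻¹' segment ℝ u v : Set X) p := by
  obtain ⟨f, g, hfg, hfu, hfv, -⟩ := exists_dual_pair_of_linearIndependent hE
    (hρ.linearIndependent_sub_of_segment_subset huv hX)
  rw [map_sub, sub_eq_zero] at hfu hfv
  exact (hρ.hasLocalSides_two (ne_zero_of_surjective_prod hfg) p).anti <| .of_forall fun x hx =>
    (convex_hyperplane f.isLinear (f o)).segment_subset hfu hfv hx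

lemma hasLocalSides_one_segment (hρ : IsRadialProjection o ρ) (hE : Module.finrank ℝ E = 3)
    {p : X} {w : E} (hw : LinearIndependent ℝ ![p - o, w - o]) :
    HasLocalSides 1 ((↑) ⁻¹' segment ℝ (p : E) w : Set X) p := by
  have : FiniteDimensional ℝ E := .of_finrank_pos (by lia)
  have : CompleteSpace E := FiniteDimensional.complete ℝ E
  obtain ⟨f, g, hfg, hfp, hfw, hgp, hgw⟩ := exists_dual_pair_of_linearIndependent hE hw
  rw [map_sub, sub_eq_zero] at hfp hfw hgp
  rw [map_sub] at hgw
  have hconvex : Convex ℝ {x : E | f x = f o ∧ g o ≤ g x} :=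
    (convex_hyperplane f.isLinear (f o)).inter (convex_halfSpace_ge g.isLinear (g o))
  exact (hρ.hasLocalSides_one hfg hfp hgp).anti <| .of_forall fun x hx =>
    hconvex.segment_subset ⟨hfp, hgp.ge⟩ ⟨hfw, by linarith⟩ hx

end IsRadialProjection

variable {V : Set E} {G : SimpleGraph E} {F D : Set X}

lemma segment_subset_segmentCarrier {u v : E} (huv : G.Adj u v) :
    segment ℝ u v ⊆ segmentCarrier V G :=
  fun _ hx => .inr (mem_iUnion₂.mpr ⟨u, v, mem_iUnion.mpr ⟨huv, hx⟩⟩)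

/-- The subgraph of `G` formed by the edges whose segment lies in `K`. -/
def segmentSubgraph (G : SimpleGraph E) (K : Set E) : SimpleGraph E where
  Adj u v := G.Adj u v ∧ segment ℝ u v ⊆ K
  symm := ⟨fun u v h => ⟨h.1.symm, segment_symm ℝ u v ▸ h.2⟩⟩
  loopless := ⟨fun _ h => G.irrefl h.1⟩

lemma segmentSubgraph_le (G : SimpleGraph E) (K : Set E) : segmentSubgraph G K ≤ G :=
  fun _ _ h => h.1

namespace IsSegmentComplex

lemma segment_subset_surface (hF : (↑) '' F = segmentCarrier V G) {u v : E} (huv : G.Adj u v) :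
    segment ℝ u v ⊆ X :=
  (segment_subset_segmentCarrier huv).trans (hF ▸ Subtype.coe_image_subset X F)

lemma hasLocalSides_two (hG : IsSegmentComplex V G) (hF : (↑) '' F = segmentCarrier V G)
    (hE : Module.finrank ℝ E = 3) (hρ : IsRadialProjection o ρ) {u v : E} (huv : G.Adj u v)
    {p : X} (hp : (p : E) ∈ openSegment ℝ u v) : HasLocalSides 2 F p := by
  refine (hρ.hasLocalSides_two_segment hE huv.ne (segment_subset_surface hF huv) p).anti ?_
  filter_upwards [continuousAt_subtype_val.eventually
    (hG.eventually_mem_segment_of_mem_segmentCarrier huv hp)] with x hx hxF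
  exact hx (hF ▸ mem_image_of_mem _ hxF)

lemma segment_subset_frontier (hG : IsSegmentComplex V G) (hF : (↑) '' F = segmentCarrier V G)
    (hE : Module.finrank ℝ E = 3) (hρ : IsRadialProjection o ρ) (hD : IsFace F D) {u v : E}
    (huv : G.Adj u v) {p : X} (hp : (p : E) ∈ openSegment ℝ u v) (hpD : p ∈ frontier D) :
    segment ℝ u v ⊆ (↑) '' frontier D := by
  set S : Set X := (↑) ⁻¹' openSegment ℝ u v
  have hX := segment_subset_surface hF huv
  have himage : (↑) '' S = openSegment ℝ u v := Subtype.image_preimage_val X _ ▸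
    inter_eq_right.mpr ((openSegment_subset_segment ℝ u v).trans hX)
  have hSF : S ⊆ F := by
    rw [← image_subset_image_iff Subtype.val_injective, himage, hF]
    exact (openSegment_subset_segment ℝ u v).trans (segment_subset_segmentCarrier huv)
  have hS : IsPreconnected S := by
    rw [← IsInducing.subtypeVal.isPreconnected_image, himage]
    exact (convex_openSegment u v).isPreconnected
  have hSD : S ⊆ frontier D := subset_frontier_of_forall_hasLocalSides hS hSF
    (fun q hq => hG.hasLocalSides_two hF hE hρ huv hq) hD.isOpen hD.disjoint hD.frontier_subset
    ⟨p, hp, hpD⟩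
  intro x hx
  refine ⟨⟨x, hX hx⟩, isClosed_frontier.closure_subset_iff.mpr hSD (closure_subtype.mpr ?_), rfl⟩
  exact himage ▸ segment_subset_closure_openSegment hx

-- Otherwise the frontier of `D` is contained, near `p`, in a single segment issuing from `p`, and
-- such a slit has only one side.
lemma exists_ne_adj_segmentSubgraph_frontier (hG : IsSegmentComplex V G)
    (hF : (↑) '' F = segmentCarrier V G) (hE : Module.finrank ℝ E = 3)
    (hρ : IsRadialProjection o ρ) (hD : IsFace F D) {p : X} (hpV : (p : E) ∈ V)
    (hpD : p ∈ frontier D) (w : E) :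
    ∃ w' ≠ w, (segmentSubgraph G ((↑) '' frontier D)).Adj p w' := by
  by_contra! hw
  obtain ⟨z, hz, hzw⟩ : ∃ z, LinearIndependent ℝ ![p - o, z - o] ∧ (G.Adj p w → z = w) := by
    by_cases hpw : G.Adj p w
    · exact ⟨w, hρ.linearIndependent_sub_of_segment_subset hpw.ne
        (segment_subset_surface hF hpw), fun _ => rfl⟩
    · obtain ⟨d, hd⟩ := exists_linearIndependent_pair_of_one_lt_finrank (R := ℝ) (by lia)
        (sub_ne_zero.mpr (hρ.coe_ne_center p))
      exact ⟨d + o, by rwa [add_sub_cancel_right], fun h => absurd h hpw⟩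
  refine HasLocalSides.not_one_of_mem_frontier hD.isOpen hD.frontier_subset_closure_compl_closure
    hpD ((hρ.hasLocalSides_one_segment hE hz).anti ?_)
  filter_upwards [continuousAt_subtype_val.eventually (hG.eventually_eq_or_mem_openSegment hpV)]
    with x hx hxD
  rcases hx (hF ▸ mem_image_of_mem _ (hD.frontier_subset hxD)) with hxp | ⟨w', hpw', hxw'⟩
  · exact mem_preimage.mpr (hxp ▸ left_mem_segment ℝ _ z)
  · have hw' : w' = w := by
      by_contra hne
      exact hw w' hne ⟨hpw', hG.segment_subset_frontier hF hE hρ hD hpw' hxw' hxD⟩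
    subst hw'
    exact hzw hpw' ▸ openSegment_subset_segment ℝ _ w' hxw'

lemma segmentSubgraph_frontier_ne_bot (hG : IsSegmentComplex V G)
    (hF : (↑) '' F = segmentCarrier V G) (hE : Module.finrank ℝ E = 3)
    (hρ : IsRadialProjection o ρ) (hD : IsFace F D) (hne : (frontier D).Nonempty) :
    segmentSubgraph G ((↑) '' frontier D) ≠ ⊥ := by
  suffices ∃ u v, (segmentSubgraph G ((↑) '' frontier D)).Adj u v from
    fun h => by simp [h] at this
  obtain ⟨p, hp⟩ := hne
  by_cases hpV : (p : E) ∈ V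
  · obtain ⟨v, -, hv⟩ := hG.exists_ne_adj_segmentSubgraph_frontier hF hE hρ hD hpV hp p
    exact ⟨p, v, hv⟩
  · have hpF : (p : E) ∈ segmentCarrier V G := hF ▸ mem_image_of_mem _ (hD.frontier_subset hp)
    have hpG := hpF.resolve_left hpV
    simp only [mem_iUnion] at hpG
    obtain ⟨u, v, huv, hpuv⟩ := hpG
    refine ⟨u, v, huv, hG.segment_subset_frontier hF hE hρ hD huv ?_ hp⟩
    exact mem_openSegment_of_ne_left_right (ne_of_mem_of_not_mem (hG.mem_of_adj huv) hpV)
      (ne_of_mem_of_not_mem (hG.mem_of_adj huv.symm) hpV) hpuv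

theorem exists_arcs_subset_frontier (hG : IsSegmentComplex V G)
    (hF : (↑) '' F = segmentCarrier V G) (hE : Module.finrank ℝ E = 3)
    (hρ : IsRadialProjection o ρ) (hD : IsFace F D) (hne : (frontier D).Nonempty) :
    ∃ (a b : X) (K L : Set X), a ≠ b ∧ IsArc a b K ∧ IsArc a b L ∧ K ∩ L ⊆ {a, b} ∧
      K ∪ L ⊆ frontier D := by
  set H := segmentSubgraph G ((↑) '' frontier D)
  have hHG : H ≤ G := segmentSubgraph_le G _
  have : Finite H.edgeSet := hG.finite_edgeSet.subset (SimpleGraph.edgeSet_mono hHG)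
  have hcycle : ¬H.IsAcyclic := by
    refine not_isAcyclic_of_forall_adj_exists_ne
      (hG.segmentSubgraph_frontier_ne_bot hF hE hρ hD hne) fun u v huv => ?_
    obtain ⟨p, hp, rfl⟩ := huv.2 (left_mem_segment ℝ u v)
    exact hG.exists_ne_adj_segmentSubgraph_frontier hF hE hρ hD (hG.mem_of_adj huv.1) hp v
  obtain ⟨a, b, K, L, hab, hK, hL, hKL, hsub⟩ :=
    (hG.drawing.anti hHG).exists_arcs_of_not_isAcyclic hcycle
  have hsub' : K ∪ L ⊆ (↑) '' frontier D :=
    hsub.trans (iUnion₂_subset fun u v => iUnion_subset fun huv => huv.2)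
  have hX : K ∪ L ⊆ range ((↑) : X → E) := hsub'.trans (image_subset_range _ _)
  obtain ⟨a, rfl⟩ := hX (.inl hK.left_mem)
  obtain ⟨b, rfl⟩ := hX (.inl hK.right_mem)
  refine ⟨a, b, (↑) ⁻¹' K, (↑) ⁻¹' L, fun h => hab (congrArg _ h),
    hK.preimage .subtypeVal (subset_union_left.trans hX),
    hL.preimage .subtypeVal (subset_union_right.trans hX), fun x hx => ?_, fun x hx => ?_⟩
  · simpa [Subtype.ext_iff] using hKL hx
  · obtain ⟨y, hy, hyx⟩ := hsub' hx
    exact Subtype.ext hyx ▸ hy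

lemma exists_hasLocalSides_two (hG : IsSegmentComplex V G) (hF : (↑) '' F = segmentCarrier V G)
    (hE : Module.finrank ℝ E = 3) (hρ : IsRadialProjection o ρ) (hD : IsFace F D)
    (hne : (frontier D).Nonempty) : ∃ p ∈ frontier D, HasLocalSides 2 F p := by
  obtain ⟨u, v, huv, hsub⟩ := SimpleGraph.ne_bot_iff_exists_adj.mp
    (hG.segmentSubgraph_frontier_ne_bot hF hE hρ hD hne)
  have hmid : midpoint ℝ u v ∈ openSegment ℝ u v := midpoint_mem_openSegment u v
  obtain ⟨p, hp, hpmid⟩ := hsub (openSegment_subset_segment ℝ u v hmid)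
  exact ⟨p, hp, hG.hasLocalSides_two hF hE hρ huv (hpmid ▸ hmid)⟩

-- At a point of the frontier with two sides there is no room for `interior Λ` and two distinct
-- components.
lemma connectedComponentIn_eq_of_frontier_subset [LocallyConnectedSpace X]
    (hG : IsSegmentComplex V G) {Λ : Set X} (hF : (↑) '' frontier Λ = segmentCarrier V G)
    (hE : Module.finrank ℝ E = 3) (hρ : IsRadialProjection o ρ) (hΛ : Λ = closure (interior Λ))
    {x y : X} (hne : (frontier (connectedComponentIn Λᶜ y)).Nonempty)
    (hsub : frontier (connectedComponentIn Λᶜ y) ⊆ frontier (connectedComponentIn Λᶜ x)) :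
    connectedComponentIn Λᶜ y = connectedComponentIn Λᶜ x := by
  by_contra hyx
  have hx := isFace_connectedComponentIn hΛ x
  have hy := isFace_connectedComponentIn hΛ y
  obtain ⟨p, hp, hsides⟩ := hG.exists_hasLocalSides_two hF hE hρ hy hne
  have hclosed : IsClosed Λ := hΛ ▸ isClosed_closure
  have hdisj (z : X) : Disjoint (connectedComponentIn Λᶜ z) (interior Λ) :=
    disjoint_left.mpr fun w hw hwΛ => connectedComponentIn_subset _ _ hw (interior_subset hwΛ)
  have hcard := hsides.card_le
    (D := ![connectedComponentIn Λᶜ x, connectedComponentIn Λᶜ y, interior Λ])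
    (by simp [Fin.forall_fin_succ, hx.isOpen, hy.isOpen])
    (by simp [Fin.forall_fin_succ, hx.frontier_subset, hy.frontier_subset,
      frontier_interior_subset])
    (by simp [Pairwise, Fin.forall_fin_succ, Function.onFun, hdisj, (hdisj _).symm,
      disjoint_connectedComponentIn_of_ne hyx, (disjoint_connectedComponentIn_of_ne hyx).symm])
    (by simp [Fin.forall_fin_succ, frontier_subset_closure hp, frontier_subset_closure (hsub hp),
      ← hΛ, hclosed.frontier_subset (hy.frontier_subset hp)])
  simp at hcard

theorem isSimpleClosedCurve_frontier_connectedComponentIn [LocallyConnectedSpace X]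
    [PreconnectedSpace X] (hX : ∀ b : X, ∃ ψ : ℂ → X, IsOpenEmbedding ψ ∧ range ψ = {b}ᶜ)
    (hG : IsSegmentComplex V G) {Λ : Set X} (hF : (↑) '' frontier Λ = segmentCarrier V G)
    (hE : Module.finrank ℝ E = 3) (hρ : IsRadialProjection o ρ) (hΛ : Λ = closure (interior Λ))
    (hconn : IsPreconnected (interior Λ)) (hne : Λ.Nonempty) {x : X} (hx : x ∉ Λ) :
    IsSimpleClosedCurve (frontier (connectedComponentIn Λᶜ x)) := by
  have hclosed : IsClosed Λ := hΛ ▸ isClosed_closure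
  have hfrontier_ne {y : X} (hy : y ∉ Λ) : (frontier (connectedComponentIn Λᶜ y)).Nonempty := by
    refine nonempty_frontier_iff.mpr ⟨⟨y, mem_connectedComponentIn hy⟩, fun h => ?_⟩
    obtain ⟨z, hz⟩ := hne
    have hzy : z ∈ connectedComponentIn Λᶜ y := h ▸ mem_univ z
    exact connectedComponentIn_subset _ _ hzy hz
  have hface := isFace_connectedComponentIn hΛ x
  obtain ⟨a, b, K, L, hab, hK, hL, hKL, hsub⟩ :=
    hG.exists_arcs_subset_frontier hF hE hρ hface (hfrontier_ne hx)
  have hjordan : ¬IsPreconnected (K ∪ L)ᶜ := by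
    refine not_isPreconnected_compl_union_arcs hX hab hK hL hKL ⟨x, fun hxKL => ?_⟩
    exact hx (hclosed.frontier_subset (hface.frontier_subset (hsub hxKL)))
  obtain ⟨y, hy, hyKL⟩ : ∃ y ∈ Λᶜ, frontier (connectedComponentIn Λᶜ y) ⊆ K ∪ L := by
    by_contra! h
    exact hjordan (isPreconnected_compl_of_forall_not_frontier_subset hΛ hconn hne
      (hsub.trans hface.frontier_subset) h)
  have hyx := hG.connectedComponentIn_eq_of_frontier_subset hF hE hρ hΛ (hfrontier_ne hy)
    (hyKL.trans hsub)
  rw [hyx] at hyKL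
  rw [hyKL.antisymm hsub]
  exact hK.isSimpleClosedCurve_union hL hKL

end IsSegmentComplex

end SegmentComplexesOnSurfaces

section ConvexBodies

variable {V : Type*} [NormedAddCommGroup V] [InnerProductSpace ℝ V]

lemma locallyConnectedSpace_sphere (n : ℕ) [Fact (Module.finrank ℝ V = n + 1)] :
    LocallyConnectedSpace (Metric.sphere (0 : V) 1) :=
  ChartedSpace.locallyConnectedSpace (EuclideanSpace ℝ (Fin n)) _

lemma exists_isOpenEmbedding_range_eq_compl_singleton
    [Fact (Module.finrank ℝ V = 2 + 1)] (b : Metric.sphere (0 : V) 1) :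
    ∃ ψ : ℂ → Metric.sphere (0 : V) 1, IsOpenEmbedding ψ ∧ range ψ = {b}ᶜ := by
  let φ := (stereographic' 2 b).symm
  have hsource : φ.source = univ := stereographic'_target b
  have htarget : φ.target = {b}ᶜ := stereographic'_source b
  let e := Complex.orthonormalBasisOneI.repr.toHomeomorph
  refine ⟨φ ∘ e, (φ.isOpenEmbedding hsource).comp e.isOpenEmbedding, ?_⟩
  rw [e.surjective.range_comp, ← image_univ, ← hsource, φ.image_source_eq_target, htarget]

lemma neg_vadd_mem_nhds_zero {M : Type*} [AddGroup M] [TopologicalSpace M]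
    [IsTopologicalAddGroup M] {s : Set M} {a : M} (ha : a ∈ interior s) : -a +ᵥ s ∈ 𝓝 0 := by
  simpa [← mem_interior_iff_mem_nhds, interior_vadd, mem_vadd_set_iff_neg_vadd_mem] using ha

variable {E : Type*} [NormedAddCommGroup E] [NormedSpace ℝ E] {P : Set E} {o : E}

lemma nonempty_homeomorph_frontier_sphere [FiniteDimensional ℝ E] (hP : Convex ℝ P)
    (hbdd : Bornology.IsBounded P) (hPint : (interior P).Nonempty) :
    Nonempty (frontier P ≃ₜ
      Metric.sphere (0 : EuclideanSpace ℝ (Fin (Module.finrank ℝ E))) 1) := by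
  let e := toEuclidean (E := E)
  obtain ⟨h, -, -, hh⟩ := exists_homeomorph_image_interior_closure_frontier_eq_unitBall
    (s := e '' P) (hP.is_linear_image e.toLinearEquiv.toLinearMap.isLinear)
    (e.toHomeomorph.image_interior P ▸ hPint.image _) (e.lipschitz.isBounded_image hbdd)
  have himage : (e.toHomeomorph.trans h) '' frontier P = Metric.sphere 0 1 := by
    rw [← hh, ← e.coe_toHomeomorph, ← e.toHomeomorph.image_frontier, image_image]
    rfl
  exact ⟨((e.toHomeomorph.trans h).image (frontier P)).trans (.setCongr himage)⟩

lemma gauge_neg_vadd_sub_eq_one_iff_mem_frontier (hP : Convex ℝ P) (ho : o ∈ interior P) {y : E} :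
    gauge (-o +ᵥ P) (y - o) = 1 ↔ y ∈ frontier P := by
  have hfrontier : frontier (-o +ᵥ P) = -o +ᵥ frontier P :=
    ((Homeomorph.vadd (-o)).image_frontier P).symm
  rw [gauge_eq_one_iff_mem_frontier (hP.vadd (-o)) (neg_vadd_mem_nhds_zero ho), hfrontier,
    sub_eq_neg_add, ← vadd_eq_add, vadd_mem_vadd_set_iff]

lemma inv_gauge_smul_eq_of_sameRay {Q : Set E} {v w : E} (hv : v ≠ 0) (hw : gauge Q w = 1)
    (h : SameRay ℝ v w) : (gauge Q v)⁻¹ • v = w := by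
  have hw₀ : w ≠ 0 := by
    rintro rfl
    simp at hw
  obtain ⟨s, t, hs, ht, hst⟩ := h.exists_pos hv hw₀
  have hgauge : s * gauge Q v = t := by
    simpa [gauge_smul_of_nonneg, hs.le, ht.le, hw] using congrArg (gauge Q) hst
  have hv₀ : gauge Q v ≠ 0 := right_ne_zero_of_mul (hgauge ▸ ht.ne')
  rw [inv_smul_eq_iff₀ hv₀]
  refine smul_right_injective E hs.ne' ?_
  simp only [hst, smul_smul, hgauge]

theorem exists_isRadialProjection_frontier [Nontrivial E] (hP : Convex ℝ P)
    (hbdd : Bornology.IsBounded P) (ho : o ∈ interior P) :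
    ∃ ρ : E → frontier P, IsRadialProjection o ρ := by
  set Q : Set E := -o +ᵥ P
  have hQ₀ : Q ∈ 𝓝 0 := neg_vadd_mem_nhds_zero ho
  have hfrontier {y : E} : gauge Q (y - o) = 1 ↔ y ∈ frontier P :=
    gauge_neg_vadd_sub_eq_one_iff_mem_frontier hP ho
  have hpos {y : E} (hy : y ≠ o) : 0 < gauge Q (y - o) :=
    (gauge_pos (absorbent_nhds_zero hQ₀) (NormedSpace.isVonNBounded_of_isBounded _
      (hbdd.vadd (-o)))).mpr (sub_ne_zero.mpr hy)
  have hmem {y : E} (hy : y ≠ o) : o + (gauge Q (y - o))⁻¹ • (y - o) ∈ frontier P := by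
    rw [← hfrontier, add_sub_cancel_left, gauge_smul_of_nonneg (inv_nonneg.mpr (hpos hy).le),
      smul_eq_mul, inv_mul_cancel₀ (hpos hy).ne']
  have hexists (y : E) : ∃ x : frontier P, y ≠ o → (x : E) - o = (gauge Q (y - o))⁻¹ • (y - o) := by
    obtain ⟨z, hz⟩ := exists_ne o
    by_cases hy : y = o
    · exact ⟨⟨_, hmem hz⟩, fun h => absurd hy h⟩
    · exact ⟨⟨_, hmem hy⟩, fun _ => add_sub_cancel_left _ _⟩
  choose ρ hρ using hexists
  refine ⟨ρ, fun h => by simp [← hfrontier] at h, ?_, fun y => ?_, fun {y x} hy hyx => ?_⟩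
  · have hgauge : Continuous fun y => gauge Q (y - o) :=
      (continuous_gauge (hP.vadd (-o)) hQ₀).comp (by fun_prop)
    have hcont : ContinuousOn (fun y => (gauge Q (y - o))⁻¹ • (y - o) + o) {o}ᶜ :=
      ((hgauge.continuousOn.inv₀ fun y hy => (hpos hy).ne').smul
        (by fun_prop)).add continuousOn_const
    rw [IsInducing.subtypeVal.continuousOn_iff]
    exact hcont.congr fun y hy => eq_add_of_sub_eq (hρ y hy)
  · by_cases hy : y = o
    · rw [hy, sub_self]
      exact .zero_left _
    · rw [hρ y hy]
      exact .sameRay_nonneg_smul_right _ (inv_nonneg.mpr (hpos hy).le)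
  · refine Subtype.ext (sub_left_injective (?_ : (ρ y : E) - o = x - o))
    rw [hρ y hy]
    exact inv_gauge_smul_eq_of_sameRay (sub_ne_zero.mpr hy) (hfrontier.mpr x.2) hyx

end ConvexBodies

theorem boundary_of_component_is_simple_closed_curve_general {E : Type*} [NormedAddCommGroup E]
    [NormedSpace ℝ E] (hE : Module.finrank ℝ E = 3) {P : Set E} (hP : Convex ℝ P)
    (hbdd : Bornology.IsBounded P) (hPint : (interior P).Nonempty) {Λ : Set (frontier P)}
    (hconn : IsPreconnected (interior Λ)) (hΛ : Λ = closure (interior Λ)) (hne : Λ.Nonempty)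
    {S : Finset (E × E)} (hS : (↑) '' frontier Λ = ⋃ p ∈ S, segment ℝ p.1 p.2)
    {x : frontier P} (hx : x ∉ Λ) :
    IsSimpleClosedCurve (frontier (connectedComponentIn Λᶜ x)) := by
  have : FiniteDimensional ℝ E := .of_finrank_pos (by omega)
  have : Nontrivial E := Module.nontrivial_of_finrank_pos (R := ℝ) (by omega)
  obtain ⟨f⟩ := nonempty_homeomorph_frontier_sphere hP hbdd hPint
  rw [hE] at f
  have : Fact (Module.finrank ℝ (EuclideanSpace ℝ (Fin 3)) = 2 + 1) := ⟨by simp⟩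
  have : LocallyConnectedSpace (frontier P) :=
    have := locallyConnectedSpace_sphere (V := EuclideanSpace ℝ (Fin 3)) 2
    f.isOpenEmbedding.locallyConnectedSpace
  have : PreconnectedSpace (frontier P) := by
    have : PreconnectedSpace (Metric.sphere (0 : EuclideanSpace ℝ (Fin 3)) 1) :=
      isPreconnected_iff_preconnectedSpace.mp <|
        isPreconnected_sphere (by simp [← Module.finrank_eq_rank]) 0 1
    exact f.symm.surjective.denseRange.preconnectedSpace f.symm.continuous
  have hcharts (b : frontier P) : ∃ ψ : ℂ → frontier P, IsOpenEmbedding ψ ∧ range ψ = {b}ᶜ := by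
    obtain ⟨ψ, hψ, hrange⟩ := exists_isOpenEmbedding_range_eq_compl_singleton (f b)
    refine ⟨f.symm ∘ ψ, f.symm.isOpenEmbedding.comp hψ, ?_⟩
    rw [range_comp, hrange, image_compl_eq f.symm.bijective, image_singleton,
      f.symm_apply_apply]
  obtain ⟨o, ho⟩ := hPint
  obtain ⟨ρ, hρ⟩ := exists_isRadialProjection_frontier hP hbdd ho
  rw [← segmentCarrier_arrangement S] at hS
  exact (isSegmentComplex_arrangement S).isSimpleClosedCurve_frontier_connectedComponentIn
    hcharts hS hE hρ hΛ hconn hne hx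

end

/-- Inverse Jordan curve theorem on the boundary of a polytope: if `Λ ⊆ ∂P` has connected
interior, equals the closure of its interior, is non-empty and proper, and its boundary is
a finite union of segments (a finite union of polygonal curves with finitely many edges),
then the boundary of each connected component of `∂P \ Λ` is a simple closed curve.
All topological operations on subsets of `∂P` are taken in the relative topology of `∂P`,
realized as the subtype `↥(frontier P)`. -/
theorem boundary_of_component_is_simple_closed_curve
    (P : Set (EuclideanSpace ℝ (Fin 3)))
    (hP : IsPolytope P) (hPint : (interior P).Nonempty)
    (Λ : Set (frontier P))
    (hconn : IsPreconnected (interior Λ))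
    (hcl : Λ = closure (interior Λ))
    (hne : Λ.Nonempty) (hproper : Λ ≠ Set.univ)
    (hpoly : ∃ SS : Finset (EuclideanSpace ℝ (Fin 3) × EuclideanSpace ℝ (Fin 3)),
      (fun p : frontier P => (p : EuclideanSpace ℝ (Fin 3))) '' frontier Λ =
        ⋃ p ∈ SS, segment ℝ p.1 p.2) :
    ∀ x ∈ (Λᶜ : Set (frontier P)),
      ∃ γ : Metric.sphere (0 : EuclideanSpace ℝ (Fin 2)) 1 → frontier P,
        Continuous γ ∧ Function.Injective γ ∧
        Set.range γ = frontier (connectedComponentIn Λᶜ x) := by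
  obtain ⟨S, rfl⟩ := hP
  obtain ⟨SS, hSS⟩ := hpoly
  exact fun x hx => boundary_of_component_is_simple_closed_curve_general (by simp)
    (convex_convexHull ℝ _) (isBounded_convexHull.mpr S.finite_toSet.isBounded) hPint hconn hcl hne
    hSS hx
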